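/- Let a ∈ ℝ, b > 0, and A := {x ∈ ℝ² : |x| > 1}. For E < 0 let N(E) := n(q_E), the negativity index of q_E(ψ) := ∫_A (|∇ψ(x)|² − ((a + b·x₁/|x|)/|x|²)·|ψ(x)|² − E·|ψ(x)|²) dx on the complex vector space of smooth compactly supported ψ : A → ℂ (N(E) is the counting function N_{(−∞,E)} of the Dirichlet realization of H_{a,b} = −Δ − (a + b·x₁/|x|)/|x|² on A). Then lim_{E↗0} N(E)/|log|E|| = (1/(2π)) · Σ m_b(e)·√(a−e), the sum running over all Mathieu eigenvalues e of M_b with e < a; this sum equals (1/(2π))·tr √((M_b − a)₋). -/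

import Mathlib

/-!
In logarithmic polar coordinates `x = e^s (cos t, sin t)`, `s > 0`, the form `q_E` with `E = -ε`
becomes `∫ (|∂ₛψ|² + |∂ₜψ|² - (a + b cos t) |ψ|² + ε e^{2s} |ψ|²) ds dt` (`qform_polar`). The angular
part is the form of `M_b - a`, so expanding in Mathieu functions splits `q_E` into the radial forms
`∫ (|u'|² - (a - e)|u|² + ε e^{2s} |u|²) ds` on `(0, ∞)` with Dirichlet condition at `0`, one for each
eigenvalue `e`. Only `e < a` contributes. For such `e`, the mass term is harmless up to
`s ≈ |log ε| / 2` and makes the form positive afterwards, so the number of negative directions is that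
of `-d²/ds² - (a - e)` on an interval of length `|log ε| / 2`, namely
`√(a - e) |log ε| / (2π) + O(1)`.

Three ingredients make this rigorous.

* Spectral theory of `M_b` below `a` (`mathieu_spectral`). A maximal orthonormal family of Mathieu
  functions with eigenvalues below `a` is finite (`MFam.card_le`), `M_b - a` is nonnegative on its
  orthogonal complement (`gap_of_maximal`), and it lists each eigenvalue with its multiplicity
  (`mult_of_maximal`). The gap uses that the resolvent of the Jacobi matrix of `M_b` on `ℓ²(ℤ)` is
  compact, symmetric and positive (`exists_resolvent`), together with the smoothness of its
  eigenvectors (`rapid_decay`, `eigen_to_sol`).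

* Upper bound (`negIndex_le`, `count_upper`). If the `k`-th angular coefficient of `ψ` vanishes at
  the points `j π / √(a - e k)`, `j ≤ M k`, then the sharp Dirichlet inequality between consecutive
  points and the mass term beyond the last one make `q_E(ψ) ≥ 0`. At `j = 0` the condition is
  automatic, so a negative subspace has dimension at most `∑ M k`.

* Lower bound (`le_negIndex`, `count_lower`). For `l` slightly larger than `π / √(a - e k)` there is a
  bump on `(0, l)` with negative radial form (`exists_bump`). Its translates by multiples of `l`, times
  the `k`-th Mathieu function, span a negative subspace as long as they stay in the region where
  `ε e^{2s}` is small.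

The two bounds differ by a factor `1 + δ`, `δ > 0` arbitrary, and bounded terms, which disappear in
the limit (`tendsto_count`).
-/

open MeasureTheory Real Filter Topology

noncomputable section

abbrev E2 := EuclideanSpace ℝ (Fin 2)

/-- negativity index of `q` over subspaces consisting of vectors satisfying `P` -/
def negIndexOn {V : Type*} [AddCommGroup V] [Module ℂ V] (P : V → Prop) (q : V → ℝ) : ℕ∞ :=
  ⨆ W ∈ {W : Submodule ℂ V | (W : Set V) ⊆ {ψ | P ψ} ∧ ∀ ψ ∈ W, ψ ≠ 0 → q ψ < 0},
    (Module.finrank ℂ W : ℕ∞)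

def IsMathieuSol (b e : ℝ) (g : ℝ → ℂ) : Prop :=
  ContDiff ℝ (⊤ : ℕ∞) g ∧ Function.Periodic g (2 * π) ∧
    ∀ t, -(deriv (deriv g) t) - (b * Real.cos t : ℂ) * g t = (e : ℂ) * g t

def IsMathieuEV (b e : ℝ) : Prop := ∃ g, g ≠ 0 ∧ IsMathieuSol b e g

/-- multiplicity of a Mathieu eigenvalue (the solution set is a linear subspace, so its
span has the same underlying set and the correct dimension). -/
def mathieuMult (b e : ℝ) : ℕ :=
  Module.finrank ℂ (Submodule.span ℂ {g : ℝ → ℂ | IsMathieuSol b e g})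

/-! ### The sharp one-dimensional Dirichlet inequality -/

/-- Strict version of the one-dimensional Dirichlet inequality: the Riccati solution
`w = -κ tan (κ (s - m))`, `m` the midpoint, is regular on the whole interval, and
`‖u'‖² - κ²‖u‖² = ‖u' - w u‖² + (w ‖u‖²)'`. -/
lemma dirichlet_ineq_aux {u u' : ℝ → ℂ} (hu : ∀ s, HasDerivAt u (u' s) s) (hc : Continuous u')
    {α ℓ κ : ℝ} (hℓ : 0 ≤ ℓ) (hκ : 0 ≤ κ) (hκℓ : κ * ℓ < π) (h0 : u α = 0) (h1 : u (α + ℓ) = 0) :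
    κ ^ 2 * ∫ s in α..(α + ℓ), ‖u s‖ ^ 2 ≤ ∫ s in α..(α + ℓ), ‖u' s‖ ^ 2 := by
  set m := α + ℓ / 2 with hm
  have hle : α ≤ α + ℓ := by linarith
  have hcu : Continuous u := continuous_iff_continuousAt.2 fun s => (hu s).continuousAt
  have hcos : ∀ s ∈ Set.Icc α (α + ℓ), cos (κ * (s - m)) ≠ 0 := by
    intro s hs
    apply ne_of_gt
    apply cos_pos_of_mem_Ioo
    constructor <;> nlinarith [hs.1, hs.2]
  set w : ℝ → ℝ := fun s => -κ * tan (κ * (s - m)) with hw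
  have hwd : ∀ s ∈ Set.Icc α (α + ℓ), HasDerivAt w (-(κ ^ 2) - w s ^ 2) s := by
    intro s hs
    have h1 : HasDerivAt (fun s => κ * (s - m)) κ s := by
      simpa using ((hasDerivAt_id s).sub_const m).const_mul κ
    have h2 := ((hasDerivAt_tan (hcos s hs)).comp s h1).const_mul (-κ)
    refine h2.congr_deriv ?_
    simp only [hw]
    rw [tan_eq_sin_div_cos]
    have hc0 := hcos s hs
    have := sin_sq_add_cos_sq (κ * (s - m))
    field_simp
    linear_combination κ ^ 2 * this
  have hsq : ∀ s, HasDerivAt (fun s => ‖u s‖ ^ 2) (2 * inner ℝ (u s) (u' s)) s :=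
    fun s => (hu s).norm_sq
  have hprod : ∀ s ∈ Set.uIcc α (α + ℓ), HasDerivAt (fun s => w s * ‖u s‖ ^ 2)
      ((-(κ ^ 2) - w s ^ 2) * ‖u s‖ ^ 2 + w s * (2 * inner ℝ (u s) (u' s))) s := by
    intro s hs
    rw [Set.uIcc_of_le hle] at hs
    exact (hwd s hs).mul (hsq s)
  have hwc : ContinuousOn w (Set.uIcc α (α + ℓ)) := by
    rw [Set.uIcc_of_le hle]
    exact fun s hs => (hwd s hs).continuousAt.continuousWithinAt
  have hi : IntervalIntegrable (fun s => (-(κ ^ 2) - w s ^ 2) * ‖u s‖ ^ 2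
      + w s * (2 * inner ℝ (u s) (u' s))) volume α (α + ℓ) := by
    apply ContinuousOn.intervalIntegrable
    fun_prop
  have hInt := intervalIntegral.integral_eq_sub_of_hasDerivAt hprod hi
  rw [h0, h1] at hInt
  simp only [norm_zero] at hInt
  have i1 : IntervalIntegrable (fun s => κ ^ 2 * ‖u s‖ ^ 2) volume α (α + ℓ) :=
    Continuous.intervalIntegrable (by fun_prop) _ _
  have i2 : IntervalIntegrable (fun s => ‖u' s‖ ^ 2) volume α (α + ℓ) :=
    Continuous.intervalIntegrable (by fun_prop) _ _
  have hmono : ∫ s in α..(α + ℓ), (κ ^ 2 * ‖u s‖ ^ 2 + ((-(κ ^ 2) - w s ^ 2) * ‖u s‖ ^ 2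
      + w s * (2 * inner ℝ (u s) (u' s)))) ≤ ∫ s in α..(α + ℓ), ‖u' s‖ ^ 2 := by
    apply intervalIntegral.integral_mono_on hle (i1.add hi) i2
    intro s _
    have h3 : ‖u' s - w s • u s‖ ^ 2 = ‖u' s‖ ^ 2 - 2 * (w s * inner ℝ (u s) (u' s))
        + w s ^ 2 * ‖u s‖ ^ 2 := by
      rw [norm_sub_sq_real, inner_smul_right, real_inner_comm, norm_smul, mul_pow,
        Real.norm_eq_abs, sq_abs]
    have h4 := sq_nonneg ‖u' s - w s • u s‖
    rw [h3] at h4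
    linarith
  rw [intervalIntegral.integral_add i1 hi, hInt] at hmono
  rw [intervalIntegral.integral_const_mul] at hmono
  simpa using hmono

/-- One-dimensional Dirichlet (Poincaré) inequality with the sharp constant. -/
lemma dirichlet_ineq {u u' : ℝ → ℂ} (hu : ∀ s, HasDerivAt u (u' s) s) (hc : Continuous u')
    {α ℓ κ : ℝ} (hℓ : 0 < ℓ) (hκ : 0 < κ) (hκℓ : κ * ℓ ≤ π) (h0 : u α = 0) (h1 : u (α + ℓ) = 0) :
    κ ^ 2 * ∫ s in α..(α + ℓ), ‖u s‖ ^ 2 ≤ ∫ s in α..(α + ℓ), ‖u' s‖ ^ 2 := by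
  have ht : Tendsto (fun κ' : ℝ => κ' ^ 2 * ∫ s in α..(α + ℓ), ‖u s‖ ^ 2) (𝓝[<] κ)
      (𝓝 (κ ^ 2 * ∫ s in α..(α + ℓ), ‖u s‖ ^ 2)) := by
    apply Tendsto.mono_left _ nhdsWithin_le_nhds
    apply Continuous.tendsto
    fun_prop
  refine le_of_tendsto ht ?_
  have : Set.Ioo 0 κ ∈ 𝓝[<] κ := Ioo_mem_nhdsLT hκ
  filter_upwards [this] with κ' h'
  exact dirichlet_ineq_aux hu hc hℓ.le h'.1.le
    (lt_of_lt_of_le (mul_lt_mul_of_pos_right h'.2 hℓ) hκℓ) h0 h1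

/-- Dirichlet conditions at all the points `α + j ℓ`, `j ≤ M`, give the inequality on
`[α, α + M ℓ]`. -/
lemma dirichlet_ineq_chain {u u' : ℝ → ℂ} (hu : ∀ s, HasDerivAt u (u' s) s) (hc : Continuous u')
    {α ℓ κ : ℝ} (hℓ : 0 < ℓ) (hκ : 0 < κ) (hκℓ : κ * ℓ ≤ π) (M : ℕ)
    (h0 : ∀ j ≤ M, u (α + j * ℓ) = 0) :
    κ ^ 2 * ∫ s in α..(α + M * ℓ), ‖u s‖ ^ 2 ≤ ∫ s in α..(α + M * ℓ), ‖u' s‖ ^ 2 := by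
  have hcu : Continuous u := continuous_iff_continuousAt.2 fun s => (hu s).continuousAt
  induction M with
  | zero => simp
  | succ M ih =>
    have i1 := ih (fun j hj => h0 j (by omega))
    have h2 := h0 (M + 1) le_rfl
    have e : α + ((M + 1 : ℕ) : ℝ) * ℓ = α + M * ℓ + ℓ := by push_cast; ring
    rw [e] at h2 ⊢
    have i2 := dirichlet_ineq hu hc hℓ hκ hκℓ (h0 M (by omega)) h2
    have c1 : Continuous (fun s => ‖u s‖ ^ 2) := by fun_prop
    have c2 : Continuous (fun s => ‖u' s‖ ^ 2) := by fun_prop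
    rw [← intervalIntegral.integral_add_adjacent_intervals
        (c1.intervalIntegrable α (α + M * ℓ)) (c1.intervalIntegrable _ _),
      ← intervalIntegral.integral_add_adjacent_intervals
        (c2.intervalIntegrable α (α + M * ℓ)) (c2.intervalIntegrable _ _)]
    linarith

/-- The radial forms are nonnegative on functions vanishing at the points `j ℓ`, `j ≤ M`, once
`M ℓ` lies in the region where the mass term dominates. -/
lemma radial_nonneg {u u' : ℝ → ℂ} (hu : ∀ s, HasDerivAt u (u' s) s) (hc : Continuous u')
    {ℓ κ ε S : ℝ} (hℓ : 0 < ℓ) (hκ : 0 < κ) (hκℓ : κ * ℓ ≤ π) (hε : 0 < ε) (M : ℕ)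
    (h0 : ∀ j ≤ M, u (j * ℓ) = 0) (hM : κ ^ 2 ≤ ε * exp (2 * (M * ℓ))) (hS : M * ℓ ≤ S) :
    0 ≤ ∫ s in (0:ℝ)..S, (‖u' s‖ ^ 2 - κ ^ 2 * ‖u s‖ ^ 2 + ε * exp (2 * s) * ‖u s‖ ^ 2) := by
  have hcu : Continuous u := continuous_iff_continuousAt.2 fun s => (hu s).continuousAt
  have c0 : Continuous (fun s => ‖u' s‖ ^ 2 - κ ^ 2 * ‖u s‖ ^ 2 + ε * exp (2 * s) * ‖u s‖ ^ 2) := by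
    fun_prop
  rw [← intervalIntegral.integral_add_adjacent_intervals
        (c0.intervalIntegrable 0 (M * ℓ)) (c0.intervalIntegrable _ _)]
  have hM0 : (0:ℝ) ≤ M * ℓ := by positivity
  have h1 := dirichlet_ineq_chain hu hc (α := 0) hℓ hκ hκℓ M (by simpa using h0)
  simp only [zero_add] at h1
  apply add_nonneg
  · have h2 : ∫ s in (0:ℝ)..(M * ℓ), (‖u' s‖ ^ 2 - κ ^ 2 * ‖u s‖ ^ 2) ≤
        ∫ s in (0:ℝ)..(M * ℓ), (‖u' s‖ ^ 2 - κ ^ 2 * ‖u s‖ ^ 2 + ε * exp (2 * s) * ‖u s‖ ^ 2) := by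
      apply intervalIntegral.integral_mono_on hM0 (Continuous.intervalIntegrable (by fun_prop) _ _)
        (c0.intervalIntegrable _ _)
      intro s _
      have : 0 ≤ ε * exp (2 * s) * ‖u s‖ ^ 2 := by positivity
      linarith
    rw [intervalIntegral.integral_sub (Continuous.intervalIntegrable (by fun_prop) _ _)
      (Continuous.intervalIntegrable (by fun_prop) _ _), intervalIntegral.integral_const_mul] at h2
    linarith
  · apply intervalIntegral.integral_nonneg hS
    intro s hs
    have h3 : κ ^ 2 ≤ ε * exp (2 * s) := hM.trans (by gcongr; exact hs.1)
    nlinarith [sq_nonneg ‖u' s‖, sq_nonneg ‖u s‖, mul_le_mul_of_nonneg_right h3 (sq_nonneg ‖u s‖)]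

/-! ### Compact symmetric operators and weighted shifts on `ℓ²(ℤ)` -/

section Hilbert
variable {H : Type*} [NormedAddCommGroup H] [InnerProductSpace ℂ H]

/-- A compact symmetric operator is bounded by `δ` on an invariant closed subspace as soon as all
its eigenvalues with eigenvector in that subspace are. -/
lemma norm_le_of_eigen_bound [CompleteSpace H] {K : H →L[ℂ] H} (hK : IsCompactOperator K)
    (hs : (K : H →ₗ[ℂ] H).IsSymmetric) {δ : ℝ} (hδ : 0 ≤ δ) (Y : Submodule ℂ H)
    (hYc : IsClosed (Y : Set H)) (hY : ∀ y ∈ Y, K y ∈ Y)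
    (hev : ∀ (μ : ℂ) (y : H), y ∈ Y → y ≠ 0 → K y = μ • y → ‖μ‖ ≤ δ) :
    ∀ y ∈ Y, ‖K y‖ ≤ δ * ‖y‖ := by
  have : CompleteSpace Y := hYc.completeSpace_coe
  rcases subsingleton_or_nontrivial Y with hsub | hnt
  · intro y hy
    have : (⟨y, hy⟩ : Y) = 0 := Subsingleton.elim _ _
    have : y = 0 := by simpa using congrArg Subtype.val this
    simp [this]
  let T : Y →L[ℂ] Y := K.restrict hY
  have hTc : IsCompactOperator T := hK.restrict' hY
  have hTs : T.IsSymmetric := hs.restrict_invariant hY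
  have hnorm : ‖T‖ ≤ δ := by
    obtain ⟨z, hz, hzn⟩ := spectrum.exists_nnnorm_eq_spectralRadius T
    rw [T.spectralRadius_eq_nnnorm hTs.isSelfAdjoint] at hzn
    have hzn' : ‖z‖ = ‖T‖ := by
      have := ENNReal.coe_inj.1 hzn
      simpa using congrArg NNReal.toReal this
    by_cases hz0 : z = 0
    · rw [← hzn', hz0]; simpa
    have := (hTc.hasEigenvalue_iff_mem_spectrum hz0).2 hz
    obtain ⟨y, hy⟩ := this.exists_hasEigenvector
    rw [← hzn']
    refine hev z y y.2 (by simpa using hy.2) ?_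
    have := hy.apply_eq_smul
    exact congrArg Subtype.val this
  intro y hy
  calc ‖K y‖ = ‖T ⟨y, hy⟩‖ := rfl
    _ ≤ ‖T‖ * ‖(⟨y, hy⟩ : Y)‖ := T.le_opNorm _
    _ ≤ δ * ‖y‖ := by gcongr; simp

/-- `K² ≤ δ K` for a positive operator `K` bounded by `δ`, tested on a vector `w`. -/
lemma sq_norm_le_of_pos {K : H →L[ℂ] H}
    (hs : (K : H →ₗ[ℂ] H).IsSymmetric) (hpos : ∀ x, 0 ≤ (inner ℂ (K x) x).re) {δ : ℝ} (hδ : 0 < δ)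
    {w : H} (hb : ‖K (K w)‖ ≤ δ * ‖K w‖) :
    ‖K w‖ ^ 2 ≤ δ * (inner ℂ (K w) w).re := by
  -- expand `0 ≤ ⟨K (w - δ⁻¹ K w), w - δ⁻¹ K w⟩`
  have h := hpos (w - ((δ⁻¹ : ℝ) : ℂ) • K w)
  have h1 : inner ℂ (K (K w)) w = inner ℂ (K w) (K w) := hs (K w) w
  have h2 : (inner ℂ (K (K w)) (K w)).re ≤ δ * ‖K w‖ ^ 2 := by
    refine (Complex.re_le_norm _).trans ((norm_inner_le_norm _ _).trans ?_)
    nlinarith [norm_nonneg (K w)]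
  have h3 : (inner ℂ (K w) (K w)).re = ‖K w‖ ^ 2 := by
    rw [inner_self_eq_norm_sq_to_K]; norm_cast
  rw [map_sub, map_smul, inner_sub_left, inner_sub_right, inner_sub_right, inner_smul_left,
    inner_smul_left, inner_smul_right, inner_smul_right, Complex.conj_ofReal, h1] at h
  simp only [Complex.sub_re, Complex.re_ofReal_mul, h3] at h
  have h4 : δ⁻¹ * (δ⁻¹ * (inner ℂ (K (K w)) (K w)).re) ≤ δ⁻¹ * (δ⁻¹ * (δ * ‖K w‖ ^ 2)) := by
    gcongr
  have h5 : δ⁻¹ * (δ⁻¹ * (δ * ‖K w‖ ^ 2)) = δ⁻¹ * ‖K w‖ ^ 2 := by field_simp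
  have h6 : δ⁻¹ * ‖K w‖ ^ 2 ≤ (inner ℂ (K w) w).re := by linarith
  rwa [inv_mul_le_iff₀ hδ] at h6

end Hilbert

/-- Square-summable sequences indexed by `ℤ`: the space of Fourier coefficients. -/
abbrev L2Z := lp (fun _ : ℤ => ℂ) 2

lemma L2Z.hasSum_sq (x : L2Z) : HasSum (fun n => ‖x n‖ ^ 2) (‖x‖ ^ 2) := by
  have := lp.hasSum_norm (p := 2) (by norm_num) x
  simpa using this

lemma memℓp_two_of_summable {x : ℤ → ℂ} (h : Summable fun n => ‖x n‖ ^ 2) : Memℓp x 2 := by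
  apply memℓp_gen
  simpa using h

lemma wshift_mem (α : ℤ → ℝ) (C : ℝ) (hα : ∀ n, |α n| ≤ C) (k : ℤ) (x : L2Z) :
    Memℓp (fun n => (α n : ℂ) * x (n + k)) 2 := by
  apply memℓp_two_of_summable
  have h1 : Summable fun n => ‖x (n + k)‖ ^ 2 :=
    (Equiv.addRight k).summable_iff.2 (L2Z.hasSum_sq x).summable
  refine Summable.of_nonneg_of_le (fun _ => by positivity) (fun n => ?_) (h1.mul_left (C ^ 2))
  rw [norm_mul, mul_pow, Complex.norm_real, Real.norm_eq_abs]
  gcongr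
  exact hα n

/-- The bounded weighted shift `(x n) ↦ (α n * x (n + k))`. -/
def wshift (α : ℤ → ℝ) (C : ℝ) (hα : ∀ n, |α n| ≤ C) (k : ℤ) : L2Z →L[ℂ] L2Z :=
  LinearMap.mkContinuous
    { toFun := fun x => ⟨fun n => (α n : ℂ) * x (n + k), wshift_mem α C hα k x⟩
      map_add' := by
        intro x y; ext n; exact mul_add _ _ _
      map_smul' := by
        intro c x; ext n; simp; ring } C (by
    intro x
    have hC : 0 ≤ C := (abs_nonneg _).trans (hα 0)
    have h1 := L2Z.hasSum_sq (⟨fun n => (α n : ℂ) * x (n + k), wshift_mem α C hα k x⟩ : L2Z)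
    have h2 : HasSum (fun n => ‖x (n + k)‖ ^ 2) (‖x‖ ^ 2) :=
      (Equiv.addRight k).hasSum_iff.2 (L2Z.hasSum_sq x)
    refine le_of_sq_le_sq ?_ (by positivity)
    rw [mul_pow]
    refine hasSum_le (fun n => ?_) h1 (h2.mul_left (C ^ 2))
    change ‖(α n : ℂ) * x (n + k)‖ ^ 2 ≤ _
    rw [norm_mul, mul_pow, Complex.norm_real, Real.norm_eq_abs]
    gcongr
    exact hα n)

@[simp] lemma wshift_apply (α : ℤ → ℝ) (C : ℝ) (hα : ∀ n, |α n| ≤ C) (k : ℤ) (x : L2Z) (n : ℤ) :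
    wshift α C hα k x n = (α n : ℂ) * x (n + k) := rfl

lemma wshift_norm_le (α : ℤ → ℝ) (C : ℝ) (hα : ∀ n, |α n| ≤ C) (k : ℤ) :
    ‖wshift α C hα k‖ ≤ C :=
  LinearMap.mkContinuous_norm_le _ ((abs_nonneg _).trans (hα 0)) _

/-- The rank-one projection onto the `n`-th coordinate. -/
def coordProj (n : ℤ) : L2Z →L[ℂ] L2Z :=
  (innerSL ℂ (lp.single 2 n (1:ℂ) : L2Z)).smulRight (lp.single 2 n (1:ℂ) : L2Z)

lemma coordProj_norm (n : ℤ) : ‖coordProj n‖ = 1 := by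
  rw [coordProj, ContinuousLinearMap.norm_smulRight_apply, innerSL_apply_norm,
    lp.norm_single (by norm_num)]
  simp

lemma coordProj_apply (n : ℤ) (x : L2Z) (m : ℤ) :
    coordProj n x m = if m = n then x n else 0 := by
  have h1 : coordProj n x = x n • (lp.single 2 n (1:ℂ) : L2Z) := by
    rw [coordProj, ContinuousLinearMap.smulRight_apply, innerSL_apply_apply, lp.inner_single_left]
    simp
  rw [h1, lp.coeFn_smul, Pi.smul_apply, lp.coeFn_single]
  by_cases h : m = n
  · subst h; simp
  · simp [h]

lemma coordProj_compact (n : ℤ) : IsCompactOperator (coordProj n) := by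
  have h : IsCompactOperator
      (ContinuousLinearMap.toSpanSingleton ℂ (lp.single 2 n (1:ℂ) : L2Z)) :=
    isCompactOperator_of_locallyCompactSpace_rng _
  exact h.comp_clm (innerSL ℂ (lp.single 2 n (1:ℂ) : L2Z))

lemma hasSum_clm_apply {E F ι : Type*} [NormedAddCommGroup E] [NormedSpace ℂ E]
    [NormedAddCommGroup F] [NormedSpace ℂ F] {R : ι → E →L[ℂ] F} {T : E →L[ℂ] F}
    (h : HasSum R T) (x : E) : HasSum (fun n => R n x) (T x) :=
  (ContinuousLinearMap.apply ℂ F x).hasSum h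

/-- A diagonal operator with summable entries is compact: it is the norm limit of finite sums of
rank-one operators. -/
lemma wshift_compact (α : ℤ → ℝ) (C : ℝ) (hα : ∀ n, |α n| ≤ C) (hsum : Summable fun n => |α n|) :
    IsCompactOperator (wshift α C hα 0) := by
  have hs : Summable fun n => (α n : ℂ) • coordProj n := by
    refine Summable.of_norm_bounded hsum fun n => ?_
    rw [norm_smul, coordProj_norm]
    simp
  have heq : ∑' n, (α n : ℂ) • coordProj n = wshift α C hα 0 := by
    ext x m
    have h1 : HasSum (fun n => ((α n : ℂ) • coordProj n) x) ((∑' n, (α n : ℂ) • coordProj n) x) :=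
      hasSum_clm_apply hs.hasSum x
    have h2 := (innerSL ℂ (lp.single 2 m (1:ℂ) : L2Z)).hasSum h1
    have h4 : ∀ y : L2Z, innerSL ℂ (lp.single 2 m (1:ℂ) : L2Z) y = y m := by
      intro y
      rw [innerSL_apply_apply, lp.inner_single_left]
      simp
    rw [h4] at h2
    have h5 : (fun n => innerSL ℂ (lp.single 2 m (1:ℂ) : L2Z) (((α n : ℂ) • coordProj n) x))
        = fun n => if n = m then (α n : ℂ) * x n else 0 := by
      funext n
      rw [h4, smul_apply, lp.coeFn_smul, Pi.smul_apply, coordProj_apply]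
      simp [eq_comm]
    rw [h5] at h2
    have h6 : HasSum (fun n => if n = m then (α n : ℂ) * x n else 0) ((α m : ℂ) * x m) := by
      have := hasSum_ite_eq m ((α m : ℂ) * x m)
      convert this using 2 with n
      split_ifs with h
      · rw [h]
      · rfl
    have h3 := h2.unique h6
    rw [h3, wshift_apply, add_zero]
  have ht : Tendsto (fun F : Finset ℤ => ∑ n ∈ F, (α n : ℂ) • coordProj n) atTop
      (𝓝 (wshift α C hα 0)) := by
    rw [← heq]; exact hs.hasSum
  refine isCompactOperator_of_tendsto ht (Eventually.of_forall fun F => ?_)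
  have hmem : ∑ n ∈ F, (α n : ℂ) • coordProj n ∈ compactOperator (RingHom.id ℂ) L2Z L2Z :=
    Submodule.sum_mem _ fun n _ => Submodule.smul_mem _ _ (coordProj_compact n)
  exact hmem

/-! ### The resolvent of the Mathieu operator on the Fourier side -/

lemma summable_inv_sq_add {c : ℝ} (hc : 0 < c) : Summable fun n : ℤ => |1 / ((n:ℝ) ^ 2 + c)| := by
  have h : Summable fun n : ℤ => 1 / (n:ℝ) ^ 2 :=
    Real.summable_one_div_int_pow.2 (by norm_num)
  have h0 : Summable fun n : ℤ => if n = 0 then 1 / c else 0 :=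
    (hasSum_ite_eq 0 (1 / c)).summable
  refine Summable.of_nonneg_of_le (fun _ => abs_nonneg _) (fun n => ?_) (h.add h0)
  rw [abs_of_pos (by positivity)]
  by_cases hn : n = 0
  · simp [hn]
  · have : 0 < (n:ℝ) ^ 2 := by positivity
    simp only [hn, if_false, add_zero]
    gcongr
    linarith

/-- The resolvent `(M_b + c)⁻¹` of the Mathieu operator on the Fourier side, where `M_b + c` is the
Jacobi matrix `(x n) ↦ (n² + c) x n - (b/2) (x (n+1) + x (n-1))`. With `G = (n² + c)⁻¹` and `B` the
matrix of `b cos`, it is `G (1 - B G)⁻¹`. -/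
theorem exists_resolvent {b c : ℝ} (hb : 0 < b) (hc : b + 1 ≤ c) :
    ∃ K : L2Z →L[ℂ] L2Z, IsCompactOperator K ∧ (K : L2Z →ₗ[ℂ] L2Z).IsSymmetric ∧
      (∀ x, 0 ≤ (inner ℂ (K x) x).re) ∧
      (∀ x d : L2Z, (∀ n : ℤ, d n = ((n:ℂ) ^ 2 + c) * x n - (b / 2) * (x (n + 1) + x (n - 1))) →
        K d = x) ∧
      (∀ (x : L2Z) (n : ℤ), ((n:ℂ) ^ 2 + c) * K x n - (b / 2) * (K x (n + 1) + K x (n - 1))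
        = x n) := by
  have hc0 : 0 < c := by linarith
  let α : ℤ → ℝ := fun n => 1 / ((n:ℝ) ^ 2 + c)
  have hα : ∀ n, |α n| ≤ 1 / c := by
    intro n
    have : 0 < (n:ℝ) ^ 2 + c := by positivity
    rw [abs_of_pos (by positivity)]
    simp only [α]
    gcongr
    nlinarith [sq_nonneg (n:ℝ)]
  let G : L2Z →L[ℂ] L2Z := wshift α (1 / c) hα 0
  have hGn : ‖G‖ ≤ 1 / c := wshift_norm_le _ _ _ _
  have hGc : IsCompactOperator G := wshift_compact _ _ _ (summable_inv_sq_add hc0)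
  have hG : ∀ x n, G x n = (α n : ℂ) * x n := by intro x n; simp [G]
  have hαn : ∀ n : ℤ, ((n:ℂ) ^ 2 + c) * (α n : ℂ) = 1 := by
    intro n
    have : (n:ℝ) ^ 2 + c ≠ 0 := by positivity
    have h2 : ((n:ℝ) ^ 2 + c) * α n = 1 := by simp only [α]; field_simp
    exact_mod_cast h2
  have hβ : ∀ n : ℤ, |(fun _ => b / 2 : ℤ → ℝ) n| ≤ b / 2 := by
    intro n; simp only; rw [abs_of_pos (by positivity)]
  let B : L2Z →L[ℂ] L2Z := wshift _ _ hβ 1 + wshift _ _ hβ (-1)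
  have hBn : ‖B‖ ≤ b := by
    refine (norm_add_le _ _).trans ?_
    linarith [wshift_norm_le _ _ hβ 1, wshift_norm_le _ _ hβ (-1)]
  have hB : ∀ x n, B x n = (b / 2 : ℂ) * (x (n + 1) + x (n - 1)) := by
    intro x n
    have : B x n = ((b / 2 : ℝ) : ℂ) * x (n + 1) + ((b / 2 : ℝ) : ℂ) * x (n + -1) := rfl
    rw [this]; push_cast; ring_nf
  have hGs : ∀ x y, inner ℂ (G x) y = inner ℂ x (G y) := by
    intro x y
    have h1 := lp.hasSum_inner (𝕜 := ℂ) (G x) y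
    have h2 := lp.hasSum_inner (𝕜 := ℂ) x (G y)
    have h3 : (fun n => inner ℂ (G x n) (y n)) = fun n => inner ℂ (x n) (G y n) := by
      funext n
      rw [hG, hG]
      simp; ring
    rw [h3] at h1
    exact h1.unique h2
  have hBs : ∀ x y, inner ℂ (B x) y = inner ℂ x (B y) := by
    intro x y
    have h1 : HasSum (fun n => (b / 2 : ℂ) * (inner ℂ (x (n + 1)) (y n)))
        (∑' n, (b / 2 : ℂ) * (inner ℂ (x (n + 1)) (y n))) := by
      apply Summable.hasSum
      have := (lp.hasSum_inner (𝕜 := ℂ) (wshift _ _ hβ 1 x) y).summable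
      refine this.congr fun n => ?_
      rw [wshift_apply]; simp [Complex.conj_ofNat]; ring
    have h2 : HasSum (fun n => (b / 2 : ℂ) * (inner ℂ (x (n - 1)) (y n)))
        (∑' n, (b / 2 : ℂ) * (inner ℂ (x (n - 1)) (y n))) := by
      apply Summable.hasSum
      have := (lp.hasSum_inner (𝕜 := ℂ) (wshift _ _ hβ (-1) x) y).summable
      refine this.congr fun n => ?_
      rw [wshift_apply, ← sub_eq_add_neg]; simp [Complex.conj_ofNat]; ring
    have h3 := h1.add h2
    have h1' := (Equiv.subRight (1:ℤ)).hasSum_iff.2 h1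
    have h2' := (Equiv.addRight (1:ℤ)).hasSum_iff.2 h2
    have h4 := h1'.add h2'
    have k1 := lp.hasSum_inner (𝕜 := ℂ) (B x) y
    have k2 := lp.hasSum_inner (𝕜 := ℂ) x (B y)
    have f1 : (fun n => inner ℂ (B x n) (y n)) = fun n =>
        (b / 2 : ℂ) * (inner ℂ (x (n + 1)) (y n)) + (b / 2 : ℂ) * (inner ℂ (x (n - 1)) (y n)) := by
      funext n
      rw [hB]; simp only [RCLike.inner_apply, map_mul, map_add, map_div₀, Complex.conj_ofReal,
        Complex.conj_ofNat]; ring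
    have f2 : (fun n => inner ℂ (x n) (B y n)) = fun n =>
        ((fun n => (b / 2 : ℂ) * (inner ℂ (x (n + 1)) (y n))) ∘ (Equiv.subRight (1:ℤ))) n
        + ((fun n => (b / 2 : ℂ) * (inner ℂ (x (n - 1)) (y n))) ∘ (Equiv.addRight (1:ℤ))) n := by
      funext n
      rw [hB]; simp; ring
    rw [f1] at k1
    rw [f2] at k2
    rw [k1.unique h3, k2.unique h4]
  have hBG : ‖B * G‖ < 1 := by
    refine (norm_mul_le _ _).trans_lt ?_
    calc ‖B‖ * ‖G‖ ≤ b * (1 / c) := by gcongr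
      _ < 1 := by rw [mul_one_div, div_lt_one hc0]; linarith
  let U := Units.oneSub (B * G) hBG
  let S : L2Z →L[ℂ] L2Z := ↑(U⁻¹)
  have hS1 : ∀ x, S x - B (G (S x)) = x := by
    intro x
    have h : (1 - B * G) * S = 1 := U.mul_inv
    have := congrArg (fun T : L2Z →L[ℂ] L2Z => T x) h
    simpa using this
  have hS2 : ∀ d, S (d - B (G d)) = d := by
    intro d
    have h : S * (1 - B * G) = 1 := U.inv_mul
    have := congrArg (fun T : L2Z →L[ℂ] L2Z => T d) h
    simpa using this
  refine ⟨G * S, hGc.comp_clm S, ?_, ?_, ?_, ?_⟩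
  · intro x y
    change inner ℂ (G (S x)) y = inner ℂ x (G (S y))
    nth_rewrite 1 [← hS1 y]
    nth_rewrite 2 [← hS1 x]
    rw [inner_sub_right, inner_sub_left, hGs, ← hBs]
  · intro x
    change 0 ≤ (inner ℂ (G (S x)) x).re
    nth_rewrite 2 [← hS1 x]
    set d := S x
    rw [inner_sub_right, Complex.sub_re]
    have h1 : (inner ℂ (G d) (B (G d))).re ≤ b * ‖G d‖ ^ 2 := by
      refine (Complex.re_le_norm _).trans ((norm_inner_le_norm _ _).trans ?_)
      have := B.le_of_opNorm_le hBn (G d)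
      nlinarith [norm_nonneg (G d)]
    have h2 : c * ‖G d‖ ^ 2 ≤ (inner ℂ (G d) d).re := by
      have e1 := Complex.hasSum_re (lp.hasSum_inner (𝕜 := ℂ) (G d) d)
      refine hasSum_le (fun n => ?_) ((L2Z.hasSum_sq (G d)).mul_left c) e1
      rw [hG]
      have h3 : d n = ((n:ℂ) ^ 2 + c) * ((α n : ℂ) * d n) := by
        rw [← mul_assoc, hαn, one_mul]
      set z := (α n : ℂ) * d n
      rw [h3]
      have h4 : (inner ℂ z (((n:ℂ) ^ 2 + c) * z)).re = ((n:ℝ) ^ 2 + c) * ‖z‖ ^ 2 := by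
        have : ((n:ℂ) ^ 2 + c) = (((n:ℝ) ^ 2 + c : ℝ) : ℂ) := by push_cast; rfl
        rw [this, RCLike.inner_apply, mul_assoc, Complex.mul_conj, ← Complex.ofReal_mul,
          Complex.ofReal_re, Complex.normSq_eq_norm_sq]
      rw [h4]
      nlinarith [mul_nonneg (sq_nonneg (n:ℝ)) (sq_nonneg ‖z‖)]
    nlinarith [sq_nonneg ‖G d‖]
  · intro x d hd
    have h1 : G (d + B x) = x := by
      ext n
      rw [hG, lp.coeFn_add, Pi.add_apply, hB, hd]
      linear_combination (x n) * (hαn n)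
    have h2 : d = (d + B x) - B (G (d + B x)) := by rw [h1]; abel
    change G (S d) = x
    rw [h2, hS2, h1]
  · intro x n
    have h1 := congrArg (fun y : L2Z => y n) (hS1 x)
    simp only [lp.coeFn_sub, Pi.sub_apply] at h1
    rw [hB] at h1
    change ((n:ℂ) ^ 2 + c) * G (S x) n - _ * (G (S x) (n + 1) + G (S x) (n - 1)) = _
    rw [← h1, hG (S x) n, ← mul_assoc, hαn, one_mul]

/-! ### Smooth periodic functions and their Fourier coefficients -/

/-- The `L²` pairing over one period, conjugate-linear in the first argument. -/
def ip (f g : ℝ → ℂ) : ℂ := ∫ t in (-π)..π, (starRingEnd ℂ) (f t) * g t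

/-- Smooth `2π`-periodic functions. -/
def SP (f : ℝ → ℂ) : Prop := ContDiff ℝ (⊤ : ℕ∞) f ∧ Function.Periodic f (2 * π)

/-- The Fourier modes `t ↦ exp (i n t)`. -/
def fexp (n : ℤ) (t : ℝ) : ℂ := Complex.exp (Complex.I * n * t)

lemma SP.continuous {f} (h : SP f) : Continuous f := h.1.continuous

lemma SP.deriv {f} (h : SP f) : SP (deriv f) := by
  refine ⟨?_, fun t => ?_⟩
  · exact (contDiff_infty_iff_deriv.1 h.1).2
  · have h1 : (fun s => f (s + 2 * π)) = f := funext h.2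
    rw [← deriv_comp_add_const, h1]

lemma SP.hasDerivAt {f} (h : SP f) (t : ℝ) : HasDerivAt f (_root_.deriv f t) t :=
  ((contDiff_infty_iff_deriv.1 h.1).1 t).hasDerivAt

lemma SP.add {f g} (hf : SP f) (hg : SP g) : SP (fun t => f t + g t) :=
  ⟨hf.1.add hg.1, fun t => by simp only [hf.2 t, hg.2 t]⟩

lemma SP.sub {f g} (hf : SP f) (hg : SP g) : SP (fun t => f t - g t) :=
  ⟨hf.1.sub hg.1, fun t => by simp only [hf.2 t, hg.2 t]⟩

lemma SP.mul {f g} (hf : SP f) (hg : SP g) : SP (fun t => f t * g t) :=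
  ⟨hf.1.mul hg.1, fun t => by simp only [hf.2 t, hg.2 t]⟩

lemma SP.const (c : ℂ) : SP (fun _ => c) := ⟨contDiff_const, fun _ => rfl⟩

lemma SP.sum {ι} {s : Finset ι} {f : ι → ℝ → ℂ} (hf : ∀ i ∈ s, SP (f i)) :
    SP (fun t => ∑ i ∈ s, f i t) :=
  ⟨ContDiff.sum fun i hi => (hf i hi).1,
    fun t => Finset.sum_congr rfl fun i hi => (hf i hi).2 t⟩

lemma SP.cos : SP (fun t => (Real.cos t : ℂ)) :=
  ⟨Complex.ofRealCLM.contDiff.comp Real.contDiff_cos, fun t => by simp⟩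

lemma ip_conj (f g : ℝ → ℂ) : (starRingEnd ℂ) (ip f g) = ip g f := by
  unfold ip
  rw [intervalIntegral.intervalIntegral_eq_integral_uIoc,
    intervalIntegral.intervalIntegral_eq_integral_uIoc]
  simp only [Complex.real_smul, map_mul, Complex.conj_ofReal]
  rw [← integral_conj]
  simp [mul_comm]

lemma cont_conj_mul {f g : ℝ → ℂ} (hf : Continuous f) (hg : Continuous g) :
    Continuous fun t => (starRingEnd ℂ) (f t) * g t :=
  (Complex.continuous_conj.comp hf).mul hg

lemma ip_add {f g h : ℝ → ℂ} (hf : Continuous f) (hg : Continuous g) (hh : Continuous h) :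
    ip f (fun t => g t + h t) = ip f g + ip f h := by
  unfold ip
  rw [← intervalIntegral.integral_add ((cont_conj_mul hf hg).intervalIntegrable _ _)
    ((cont_conj_mul hf hh).intervalIntegrable _ _)]
  simp only [mul_add]

lemma ip_smul (f g : ℝ → ℂ) (c : ℂ) : ip f (fun t => c * g t) = c * ip f g := by
  unfold ip
  rw [← intervalIntegral.integral_const_mul]
  congr 1; ext t; ring

lemma ip_sub {f g h : ℝ → ℂ} (hf : Continuous f) (hg : Continuous g) (hh : Continuous h) :
    ip f (fun t => g t - h t) = ip f g - ip f h := by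
  unfold ip
  rw [← intervalIntegral.integral_sub ((cont_conj_mul hf hg).intervalIntegrable _ _)
    ((cont_conj_mul hf hh).intervalIntegrable _ _)]
  simp only [mul_sub]

lemma ip_sum {ι} {s : Finset ι} {f : ℝ → ℂ} {g : ι → ℝ → ℂ} (hf : Continuous f)
    (hg : ∀ i, Continuous (g i)) :
    ip f (fun t => ∑ i ∈ s, g i t) = ∑ i ∈ s, ip f (g i) := by
  unfold ip
  simp only [Finset.mul_sum]
  rw [intervalIntegral.integral_finsetSum]
  intro i _
  exact (cont_conj_mul hf (hg i)).intervalIntegrable _ _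

lemma ip_add_left {f g h : ℝ → ℂ} (hf : Continuous f) (hg : Continuous g) (hh : Continuous h) :
    ip (fun t => g t + h t) f = ip g f + ip h f := by
  rw [← ip_conj, ip_add hf hg hh, map_add, ip_conj, ip_conj]

lemma ip_smul_left (f g : ℝ → ℂ) (c : ℂ) :
    ip (fun t => c * g t) f = (starRingEnd ℂ) c * ip g f := by
  rw [← ip_conj, ip_smul, map_mul, ip_conj]

lemma ip_self (f : ℝ → ℂ) : ip f f = ((∫ t in (-π)..π, ‖f t‖ ^ 2 : ℝ) : ℂ) := by
  unfold ip
  rw [← intervalIntegral.integral_ofReal]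
  congr 1; ext t
  rw [mul_comm, Complex.mul_conj, Complex.normSq_eq_norm_sq]

lemma intervalIntegral_nonneg' {f : ℝ → ℝ} (hf : ∀ t, 0 ≤ f t) :
    0 ≤ ∫ t in (-π)..π, f t :=
  intervalIntegral.integral_nonneg (by linarith [pi_pos]) fun t _ => hf t

/-- A periodic continuous function of zero norm vanishes. -/
lemma eq_zero_of_ip {f : ℝ → ℂ} (hf : Continuous f) (hp : Function.Periodic f (2 * π))
    (h : ip f f = 0) : f = 0 := by
  rw [ip_self] at h
  have h1 : ∫ t in (-π)..π, ‖f t‖ ^ 2 = 0 := by exact_mod_cast h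
  have h0 : ∀ t ∈ Set.Ioc (-π) π, f t = 0 := by
    by_contra! hc
    obtain ⟨t, ht, hne⟩ := hc
    have := intervalIntegral.integral_pos (a := -π) (b := π) (f := fun t => ‖f t‖ ^ 2)
      (by linarith [pi_pos]) (by fun_prop) (fun _ _ => by positivity)
      ⟨t, ⟨ht.1.le, ht.2⟩, by positivity⟩
    linarith
  ext t
  obtain ⟨y, hy, hyt⟩ := hp.exists_mem_Ioc (by positivity : (0:ℝ) < 2 * π) t (-π)
  rw [hyt]
  exact h0 y ⟨hy.1, by linarith [hy.2]⟩

lemma ip_deriv {u v : ℝ → ℂ} (hu : SP u) (hv : SP v) : ip (deriv u) v = - ip u (deriv v) := by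
  unfold ip
  have hc : ∀ t, HasDerivAt (fun t => (starRingEnd ℂ) (u t)) ((starRingEnd ℂ) (deriv u t)) t :=
    fun t => Complex.conjCLE.toContinuousLinearMap.hasFDerivAt.comp_hasDerivAt t (hu.hasDerivAt t)
  have h := intervalIntegral.integral_mul_deriv_eq_deriv_mul (a := -π) (b := π)
    (fun t _ => hc t) (fun t _ => hv.hasDerivAt t)
    ((Complex.continuous_conj.comp hu.deriv.continuous).intervalIntegrable _ _)
    (hv.deriv.continuous.intervalIntegrable _ _)
  have e1 : u π = u (-π) := by rw [← hu.2 (-π)]; congr 1; ring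
  have e2 : v π = v (-π) := by rw [← hv.2 (-π)]; congr 1; ring
  rw [h, e1, e2]; ring

lemma fexp_hasDerivAt (n : ℤ) (t : ℝ) : HasDerivAt (fexp n) (Complex.I * n * fexp n t) t := by
  unfold fexp
  have h1 : HasDerivAt (fun t : ℝ => Complex.I * n * (t:ℂ)) (Complex.I * n) t := by
    simpa using (Complex.ofRealCLM.hasDerivAt (x := t)).const_mul (Complex.I * n)
  simpa [mul_comm] using h1.cexp

lemma fexp_deriv (n : ℤ) : deriv (fexp n) = fun t => Complex.I * n * fexp n t :=
  funext fun t => (fexp_hasDerivAt n t).deriv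

lemma fexp_SP (n : ℤ) : SP (fexp n) := by
  constructor
  · unfold fexp
    exact Complex.contDiff_exp.comp (contDiff_const.mul Complex.ofRealCLM.contDiff)
  · intro t
    unfold fexp
    rw [Complex.exp_eq_exp_iff_exists_int]
    exact ⟨n, by push_cast; ring⟩

lemma fexp_norm (n : ℤ) (t : ℝ) : ‖fexp n t‖ = 1 := by
  unfold fexp
  have : Complex.I * n * t = ((n * t : ℝ) : ℂ) * Complex.I := by push_cast; ring
  rw [this, Complex.norm_exp_ofReal_mul_I]

lemma fexp_cos (n : ℤ) (t : ℝ) :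
    (Real.cos t : ℂ) * fexp n t = (1 / 2) * fexp (n + 1) t + (1 / 2) * fexp (n - 1) t := by
  unfold fexp
  have e1 : Complex.I * ((n + 1 : ℤ) : ℂ) * t = (t * Complex.I) + Complex.I * n * t := by
    push_cast; ring
  have e2 : Complex.I * ((n - 1 : ℤ) : ℂ) * t = (-t * Complex.I) + Complex.I * n * t := by
    push_cast; ring
  rw [e1, e2, Complex.exp_add, Complex.exp_add, Complex.ofReal_cos, Complex.cos]
  ring

lemma fexp_ip (n m : ℤ) : ip (fexp n) (fexp m) = if n = m then 2 * (π:ℂ) else 0 := by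
  split_ifs with h
  · subst h
    rw [ip_self]
    simp [fexp_norm]; ring
  · have h1 := ip_deriv (fexp_SP n) (fexp_SP m)
    rw [fexp_deriv, fexp_deriv, ip_smul, ip_smul_left] at h1
    simp only [map_mul, Complex.conj_I, map_intCast] at h1
    have h2 : ((m:ℂ) - n) * ip (fexp n) (fexp m) = 0 := by
      have : Complex.I * (((m:ℂ) - n) * ip (fexp n) (fexp m)) = 0 := by linear_combination h1
      exact (mul_eq_zero.1 this).resolve_left Complex.I_ne_zero
    refine (mul_eq_zero.1 h2).resolve_left ?_
    rw [sub_eq_zero]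
    intro hh
    exact h (by exact_mod_cast hh.symm)

/-- Existence of the Fourier transform: continuous periodic functions are mapped to their Fourier
coefficients, isometrically up to the normalization of the measure. -/
lemma exists_fourier : ∃ J : (ℝ → ℂ) → L2Z, ∀ f, Continuous f → Function.Periodic f (2 * π) →
    (∀ n, J f n = (1 / (2 * π) : ℂ) * ip (fexp n) f) ∧
    ∀ g, Continuous g → Function.Periodic g (2 * π) →
      inner ℂ (J f) (J g) = (1 / (2 * π) : ℂ) * ip f g := by
  classical
  have : Fact (0 < 2 * π) := ⟨two_pi_pos⟩
  let lf : ∀ f : ℝ → ℂ, Continuous f → Function.Periodic f (2 * π) → C(AddCircle (2 * π), ℂ) :=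
    fun f hf hp => ⟨hp.lift, continuous_coinduced_dom.2 hf⟩
  refine ⟨fun f => if h : Continuous f ∧ Function.Periodic f (2 * π) then
    fourierBasis.repr (ContinuousMap.toLp 2 AddCircle.haarAddCircle ℂ (lf f h.1 h.2)) else 0, ?_⟩
  intro f hf hp
  have e : -π + 2 * π = π := by ring
  refine ⟨fun n => ?_, fun g hg hgp => ?_⟩
  · simp only [hf, hp, and_self, dite_true]
    rw [fourierBasis_repr, fourierCoeff_toLp, fourierCoeff_eq_intervalIntegral _ _ (-π), e]
    rw [Complex.real_smul]
    push_cast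
    congr 1
    unfold ip
    congr 1; ext t
    have : (fourier (-n) : C(AddCircle (2 * π), ℂ)) (t : AddCircle (2 * π))
        = (starRingEnd ℂ) (fexp n t) := by
      rw [fourier_neg, fourier_coe_apply]
      unfold fexp
      congr 2
      push_cast
      have : (π:ℂ) ≠ 0 := by exact_mod_cast pi_ne_zero
      field_simp
    rw [this, smul_eq_mul]
    rfl
  · simp only [hf, hp, hg, hgp, and_self, dite_true]
    rw [LinearIsometryEquiv.inner_map_map, ContinuousMap.inner_toLp,
      AddCircle.integral_haarAddCircle, ← AddCircle.intervalIntegral_preimage (2 * π) (-π), e,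
      Complex.real_smul]
    push_cast
    rw [one_div]
    congr 1
    unfold ip
    congr 1; ext t
    rw [mul_comm]
    rfl

/-! ### The Mathieu operator and regularity of its eigenvectors -/

/-- The Mathieu operator `M_b v = -v'' - b cos(t) v`. -/
def Mop (b : ℝ) (v : ℝ → ℂ) (t : ℝ) : ℂ := -(deriv (deriv v) t) - (b * Real.cos t : ℂ) * v t

lemma Mop_SP (b : ℝ) {v : ℝ → ℂ} (hv : SP v) : SP (Mop b v) := by
  have h := (((SP.const (-1)).mul hv.deriv.deriv)).sub (((SP.const b).mul SP.cos).mul hv)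
  have e : Mop b v = fun t => -1 * deriv (deriv v) t - (b * Real.cos t : ℂ) * v t := by
    funext t; simp [Mop]
  rw [e]; exact h

lemma ip_cos_left (b : ℝ) (u v : ℝ → ℂ) :
    ip (fun t => (b * Real.cos t : ℂ) * u t) v = ip u (fun t => (b * Real.cos t : ℂ) * v t) := by
  unfold ip
  congr 1; ext t
  simp only [map_mul, Complex.conj_ofReal]
  ring

lemma Mop_eq (b : ℝ) (v : ℝ → ℂ) :
    Mop b v = fun t => (-1 * deriv (deriv v) t) - (b * Real.cos t : ℂ) * v t := by
  funext t; simp [Mop]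

lemma ip_Mop_right {b : ℝ} {u v : ℝ → ℂ} (hu : SP u) (hv : SP v) :
    ip u (Mop b v) = ip (deriv u) (deriv v) - ip u (fun t => (b * Real.cos t : ℂ) * v t) := by
  have hc : SP (fun t => (b * Real.cos t : ℂ) * v t) := ((SP.const b).mul SP.cos).mul hv
  rw [Mop_eq, ip_sub hu.continuous ((SP.const _).mul hv.deriv.deriv).continuous hc.continuous,
    ip_smul, ip_deriv hu hv.deriv]
  ring

lemma ip_Mop_symm {b : ℝ} {u v : ℝ → ℂ} (hu : SP u) (hv : SP v) :
    ip (Mop b u) v = ip u (Mop b v) := by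
  rw [← ip_conj, ip_Mop_right hv hu, ip_Mop_right hu hv, map_sub, ip_conj, ip_conj, ip_cos_left]

lemma Mop_fexp (b : ℝ) (n : ℤ) : Mop b (fexp n) = fun t => ((n:ℂ) ^ 2 * fexp n t
    + -(b / 2) * fexp (n + 1) t) + -(b / 2) * fexp (n - 1) t := by
  funext t
  have h2 : deriv (deriv (fexp n)) t = -(n:ℂ) ^ 2 * fexp n t := by
    rw [fexp_deriv, deriv_const_mul_field, fexp_deriv]
    linear_combination (n:ℂ) ^ 2 * fexp n t * Complex.I_sq
  unfold Mop
  rw [h2, mul_assoc, fexp_cos]; ring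

/-- On the Fourier side the Mathieu operator is a Jacobi matrix. -/
lemma ip_fexp_Mop {b : ℝ} {v : ℝ → ℂ} (hv : SP v) (n : ℤ) :
    ip (fexp n) (Mop b v) = (n:ℂ) ^ 2 * ip (fexp n) v
      - (b / 2) * (ip (fexp (n + 1)) v + ip (fexp (n - 1)) v) := by
  have c : ∀ (k : ℂ) (n : ℤ), Continuous fun t => k * fexp n t :=
    fun k n => continuous_const.mul (fexp_SP n).continuous
  rw [← ip_Mop_symm (fexp_SP n) hv, Mop_fexp, ip_add_left hv.continuous
      (g := fun t => (n:ℂ) ^ 2 * fexp n t + -(b / 2) * fexp (n + 1) t) ((c _ _).add (c _ _)) (c _ _),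
    ip_add_left hv.continuous (c _ _) (c _ _), ip_smul_left, ip_smul_left, ip_smul_left]
  simp only [map_pow, map_intCast, map_neg, map_div₀, Complex.conj_ofReal, Complex.conj_ofNat]
  ring

/-- Bootstrapping the three-term recurrence: its bounded solutions decay rapidly. -/
lemma rapid_decay {b c l : ℝ} {x : ℤ → ℂ} (C₀ : ℝ) (hx0 : ∀ n, ‖x n‖ ≤ C₀)
    (hx : ∀ n : ℤ, ((n:ℂ) ^ 2 + c) * x n - (b / 2) * (x (n + 1) + x (n - 1)) = l * x n) (p : ℕ) :
    ∃ C, ∀ n : ℤ, (1 + (n:ℝ) ^ 2) ^ p * ‖x n‖ ≤ C := by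
  induction p with
  | zero => exact ⟨C₀, by simpa using hx0⟩
  | succ p ih =>
    obtain ⟨C, hC⟩ := ih
    refine ⟨|l + 1 - c| * C + |b / 2| * (3 ^ p * C + 3 ^ p * C), fun n => ?_⟩
    have e : ((1 + (n:ℝ) ^ 2 : ℝ) : ℂ) * x n = ((l + 1 - c : ℝ) : ℂ) * x n
        + ((b / 2 : ℝ) : ℂ) * (x (n + 1) + x (n - 1)) := by
      push_cast
      linear_combination hx n
    have e2 : (1 + (n:ℝ) ^ 2) * ‖x n‖ ≤ |l + 1 - c| * ‖x n‖
        + |b / 2| * (‖x (n + 1)‖ + ‖x (n - 1)‖) := by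
      have h0 : (1 + (n:ℝ) ^ 2) * ‖x n‖ = ‖((1 + (n:ℝ) ^ 2 : ℝ) : ℂ) * x n‖ := by
        rw [norm_mul, Complex.norm_real, Real.norm_eq_abs, abs_of_pos (by positivity)]
      rw [h0, e]
      refine (norm_add_le _ _).trans ?_
      rw [norm_mul, norm_mul, Complex.norm_real, Complex.norm_real, Real.norm_eq_abs,
        Real.norm_eq_abs]
      gcongr
      exact norm_add_le _ _
    have hp : ∀ m : ℤ, (m = n + 1 ∨ m = n - 1) → (1 + (n:ℝ) ^ 2) ^ p * ‖x m‖ ≤ 3 ^ p * C := by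
      intro m hm
      have : (1 + (n:ℝ) ^ 2) ≤ 3 * (1 + (m:ℝ) ^ 2) := by
        rcases hm with rfl | rfl
        · push_cast; nlinarith [sq_nonneg ((n:ℝ) + 2), sq_nonneg ((n:ℝ) + 3 / 2)]
        · push_cast; nlinarith [sq_nonneg ((n:ℝ) - 2), sq_nonneg ((n:ℝ) - 3 / 2)]
      calc (1 + (n:ℝ) ^ 2) ^ p * ‖x m‖ ≤ (3 * (1 + (m:ℝ) ^ 2)) ^ p * ‖x m‖ := by gcongr
        _ = 3 ^ p * ((1 + (m:ℝ) ^ 2) ^ p * ‖x m‖) := by rw [mul_pow]; ring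
        _ ≤ _ := by gcongr; exact hC m
    calc (1 + (n:ℝ) ^ 2) ^ (p + 1) * ‖x n‖ = (1 + (n:ℝ) ^ 2) ^ p * ((1 + (n:ℝ) ^ 2) * ‖x n‖) := by
          ring
      _ ≤ (1 + (n:ℝ) ^ 2) ^ p * (|l + 1 - c| * ‖x n‖ + |b / 2| * (‖x (n + 1)‖ + ‖x (n - 1)‖)) := by
          gcongr
      _ = |l + 1 - c| * ((1 + (n:ℝ) ^ 2) ^ p * ‖x n‖) + |b / 2| * ((1 + (n:ℝ) ^ 2) ^ p * ‖x (n + 1)‖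
          + (1 + (n:ℝ) ^ 2) ^ p * ‖x (n - 1)‖) := by ring
      _ ≤ _ := by
          have h1 := hC n
          have h2 := hp _ (Or.inl rfl)
          have h3 := hp _ (Or.inr rfl)
          exact add_le_add (mul_le_mul_of_nonneg_left h1 (abs_nonneg _))
            (mul_le_mul_of_nonneg_left (add_le_add h2 h3) (abs_nonneg _))

lemma iteratedDeriv_fexp (n : ℤ) (z : ℂ) (k : ℕ) :
    iteratedDeriv k (fun t => z * fexp n t) = fun t => z * (Complex.I * n) ^ k * fexp n t := by
  induction k with
  | zero => simp
  | succ k ih =>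
    rw [iteratedDeriv_succ, ih]
    funext t
    rw [deriv_const_mul_field, fexp_deriv]
    ring

/-- A rapidly decreasing sequence is the sequence of Fourier coefficients of a smooth periodic
function. -/
lemma exists_synthesis {x : ℤ → ℂ} (hx : ∀ p : ℕ, ∃ C, ∀ n : ℤ, (1 + (n:ℝ) ^ 2) ^ p * ‖x n‖ ≤ C) :
    ∃ g, SP g ∧ ∀ n, (1 / (2 * π) : ℂ) * ip (fexp n) g = x n := by
  have hsum : ∀ k : ℕ, Summable fun n : ℤ => ‖x n‖ * (|(n:ℝ)|) ^ k := by
    intro k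
    obtain ⟨C, hC⟩ := hx (k + 1)
    have h1 := (summable_inv_sq_add (c := 1) one_pos).mul_left C
    refine Summable.of_nonneg_of_le (fun _ => by positivity) (fun n => ?_) h1
    have h2 : (0:ℝ) < 1 + (n:ℝ) ^ 2 := by positivity
    rw [abs_of_pos (a := 1 / ((n:ℝ) ^ 2 + 1)) (by positivity), mul_one_div, le_div_iff₀ (by positivity)]
    refine le_trans ?_ (hC n)
    have h3 : |(n:ℝ)| ≤ 1 + (n:ℝ) ^ 2 := by
      rw [← sq_abs (n:ℝ)]; nlinarith [sq_nonneg (|(n:ℝ)| - 1), abs_nonneg (n:ℝ)]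
    calc ‖x n‖ * |(n:ℝ)| ^ k * ((n:ℝ) ^ 2 + 1)
        ≤ ‖x n‖ * (1 + (n:ℝ) ^ 2) ^ k * ((n:ℝ) ^ 2 + 1) := by gcongr
      _ = _ := by ring
  have hs0 : Summable fun n : ℤ => ‖x n‖ := by simpa using hsum 0
  refine ⟨fun t => ∑' n, x n * fexp n t, ⟨?_, ?_⟩, ?_⟩
  · refine contDiff_tsum (v := fun k n => ‖x n‖ * |(n:ℝ)| ^ k)
      (fun n => contDiff_const.mul (fexp_SP n).1) (fun k _ => hsum k) ?_
    intro k n t _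
    rw [norm_iteratedFDeriv_eq_norm_iteratedDeriv, iteratedDeriv_fexp]
    simp [fexp_norm]
  · intro t
    simp only [(fexp_SP _).2 t]
  · intro m
    have hF : HasSum (fun n => ∫ t in (-π)..π, (starRingEnd ℂ) (fexp m t) * (x n * fexp n t))
        (∫ t in (-π)..π, (starRingEnd ℂ) (fexp m t) * ∑' n, x n * fexp n t) := by
      refine intervalIntegral.hasSum_integral_of_dominated_convergence
        (fun n _ => ‖x n‖) (fun n => ?_) (fun n => ?_) ?_ ?_ ?_
      · exact (cont_conj_mul (fexp_SP m).continuous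
          (continuous_const.mul (fexp_SP n).continuous)).aestronglyMeasurable
      · exact Filter.Eventually.of_forall fun t _ => by simp [fexp_norm]
      · exact Filter.Eventually.of_forall fun t _ => hs0
      · simp
      · refine Filter.Eventually.of_forall fun t _ => HasSum.mul_left _ ?_
        refine Summable.hasSum (Summable.of_norm ?_)
        simpa [fexp_norm] using hs0
    have h2 : (fun n => ∫ t in (-π)..π, (starRingEnd ℂ) (fexp m t) * (x n * fexp n t))
        = fun n => if n = m then x m * (2 * π) else 0 := by
      funext n
      have := ip_smul (fexp m) (fexp n) (x n)
      unfold ip at this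
      rw [this]
      change x n * ip (fexp m) (fexp n) = _
      rw [fexp_ip]
      by_cases h : n = m
      · simp [h]
      · rw [if_neg h, if_neg (fun hh => h hh.symm), mul_zero]
    rw [h2] at hF
    have h3 := hF.unique (hasSum_ite_eq m (x m * (2 * π)))
    unfold ip
    rw [h3]
    have : (π:ℂ) ≠ 0 := by exact_mod_cast pi_ne_zero
    field_simp

/-- Defining properties of the Fourier transform on continuous periodic functions. -/
def IsFT (J : (ℝ → ℂ) → L2Z) : Prop := ∀ f, Continuous f → Function.Periodic f (2 * π) →
    (∀ n, J f n = (1 / (2 * π) : ℂ) * ip (fexp n) f) ∧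
    ∀ g, Continuous g → Function.Periodic g (2 * π) →
      inner ℂ (J f) (J g) = (1 / (2 * π) : ℂ) * ip f g

lemma inv_two_pi_ne_zero : (1 / (2 * π) : ℂ) ≠ 0 := by
  have : (π:ℂ) ≠ 0 := by exact_mod_cast pi_ne_zero
  simp [this]

lemma FT_injective {J} (hJ : IsFT J) {f : ℝ → ℂ} (hf : SP f)
    (h : ∀ n, ip (fexp n) f = 0) : f = 0 := by
  have h1 : J f = 0 := by
    ext n
    rw [(hJ f hf.continuous hf.2).1, h]
    simp
  have h2 := (hJ f hf.continuous hf.2).2 f hf.continuous hf.2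
  rw [h1, inner_zero_left] at h2
  refine eq_zero_of_ip hf.continuous hf.2 ?_
  exact (mul_eq_zero.1 h2.symm).resolve_left inv_two_pi_ne_zero

lemma isMathieuSol_iff {b e : ℝ} {g : ℝ → ℂ} :
    IsMathieuSol b e g ↔ SP g ∧ Mop b g = fun t => (e:ℂ) * g t := by
  unfold IsMathieuSol SP
  rw [and_assoc, funext_iff]
  rfl

/-- An `ℓ²` solution of the three-term recurrence is the Fourier transform of a Mathieu function. -/
lemma eigen_to_sol {J} (hJ : IsFT J) {b c l : ℝ} {x : L2Z}
    (hx : ∀ n : ℤ, ((n:ℂ) ^ 2 + c) * x n - (b / 2) * (x (n + 1) + x (n - 1)) = l * x n) :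
    ∃ g, IsMathieuSol b (l - c) g ∧ J g = x := by
  have hpi := inv_two_pi_ne_zero
  obtain ⟨g, hg, hgx⟩ := exists_synthesis (x := x) fun p =>
    rapid_decay ‖x‖ (fun n => lp.norm_apply_le_norm (by norm_num) x n) hx p
  refine ⟨g, ?_, ?_⟩
  · rw [isMathieuSol_iff]
    refine ⟨hg, ?_⟩
    have hF : SP fun t => Mop b g t - ((l - c : ℝ) : ℂ) * g t :=
      (Mop_SP b hg).sub ((SP.const _).mul hg)
    have := FT_injective hJ hF (fun n => by
      rw [ip_sub (fexp_SP n).continuous (Mop_SP b hg).continuous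
        ((SP.const _).mul hg).continuous, ip_smul, ip_fexp_Mop hg]
      have h := hx n
      rw [← hgx, ← hgx, ← hgx] at h
      apply mul_left_cancel₀ hpi
      push_cast
      linear_combination h)
    funext t
    have h2 := congrFun this t
    simp only [Pi.zero_apply, sub_eq_zero] at h2
    exact h2
  · ext n
    rw [(hJ g hg.continuous hg.2).1, hgx]

/-! ### Orthonormal families of Mathieu functions -/

/-- The quadratic form of `M_b - a` on one period. -/
def Qf (a b : ℝ) (v v' : ℝ → ℂ) : ℝ :=
  ∫ t in (-π)..π, (‖v' t‖ ^ 2 - (a + b * Real.cos t) * ‖v t‖ ^ 2)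

/-- Orthonormal families of Mathieu functions with eigenvalues below `a`. -/
structure MFam (a b : ℝ) {m : ℕ} (e : Fin m → ℝ) (g : Fin m → ℝ → ℂ) : Prop where
  sol : ∀ i, IsMathieuSol b (e i) (g i)
  lt : ∀ i, e i < a
  orth : ∀ i j, ip (g i) (g j) = if i = j then 1 else 0

lemma IsMathieuSol.sp {b e : ℝ} {g} (h : IsMathieuSol b e g) : SP g := (isMathieuSol_iff.1 h).1

lemma Qf_eq {a b : ℝ} {v : ℝ → ℂ} (hv : SP v) :
    (Qf a b v (deriv v) : ℂ) = ip v (Mop b v) - a * ip v v := by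
  have hc := hv.continuous
  have hc' := hv.deriv.continuous
  have h1 : ip v (fun t => (b * Real.cos t : ℂ) * v t)
      = ((∫ t in (-π)..π, b * Real.cos t * ‖v t‖ ^ 2 : ℝ) : ℂ) := by
    unfold ip
    rw [← intervalIntegral.integral_ofReal]
    congr 1; ext t
    rw [Complex.ofReal_mul, ← Complex.normSq_eq_norm_sq, ← Complex.mul_conj]
    push_cast; ring
  rw [ip_Mop_right hv hv, ip_self, ip_self, h1]
  norm_cast
  unfold Qf
  rw [← intervalIntegral.integral_const_mul, ← intervalIntegral.integral_sub,
    ← intervalIntegral.integral_sub]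
  · congr 1; ext t; ring
  all_goals
    apply Continuous.intervalIntegrable
    fun_prop

section fam
variable {a b : ℝ} {m : ℕ} {e : Fin m → ℝ} {g : Fin m → ℝ → ℂ}

lemma MFam.ip_comb (h : MFam a b e g) (c : Fin m → ℂ) (i : Fin m) :
    ip (g i) (fun t => ∑ j, c j * g j t) = c i := by
  rw [ip_sum (h.sol i).sp.continuous
    (fun j => ((SP.const (c j)).mul (h.sol j).sp).continuous)]
  simp [ip_smul, h.orth]

lemma ip_comb_left {ι} [Fintype ι] {g : ι → ℝ → ℂ} (hg : ∀ i, Continuous (g i)) (c : ι → ℂ)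
    {f : ℝ → ℂ} (hf : Continuous f) :
    ip (fun t => ∑ j, c j * g j t) f = ∑ j, (starRingEnd ℂ) (c j) * ip (g j) f := by
  rw [← ip_conj, ip_sum (g := fun j t => c j * g j t) hf
    (fun j => continuous_const.mul (hg j)), map_sum]
  simp only [ip_smul, map_mul, ip_conj]

lemma MFam.comb_sp (h : MFam a b e g) (c : Fin m → ℂ) : SP (fun t => ∑ j, c j * g j t) :=
  SP.sum fun j _ => (SP.const (c j)).mul (h.sol j).sp

lemma MFam.ip_Mop (h : MFam a b e g) (i : Fin m) {v : ℝ → ℂ} (hv : SP v) :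
    ip (g i) (Mop b v) = e i * ip (g i) v := by
  rw [← ip_Mop_symm (h.sol i).sp hv, (isMathieuSol_iff.1 (h.sol i)).2, ip_smul_left,
    Complex.conj_ofReal]

lemma MFam.Qf_comb (h : MFam a b e g) (c : Fin m → ℂ) :
    Qf a b (fun t => ∑ j, c j * g j t) (deriv fun t => ∑ j, c j * g j t)
      = ∑ i, (e i - a) * ‖c i‖ ^ 2 := by
  have hv := h.comb_sp c
  have h1 := Qf_eq (a := a) (b := b) hv
  rw [ip_comb_left (fun i => (h.sol i).sp.continuous) c (Mop_SP b hv).continuous,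
    ip_comb_left (fun i => (h.sol i).sp.continuous) c hv.continuous, Finset.mul_sum,
    ← Finset.sum_sub_distrib] at h1
  have h2 : ∀ i, (starRingEnd ℂ) (c i) * ip (g i) (Mop b fun t => ∑ j, c j * g j t)
      - a * ((starRingEnd ℂ) (c i) * ip (g i) fun t => ∑ j, c j * g j t)
      = (((e i - a) * ‖c i‖ ^ 2 : ℝ) : ℂ) := by
    intro i
    rw [h.ip_Mop i hv, h.ip_comb, Complex.ofReal_mul, ← Complex.normSq_eq_norm_sq,
      ← Complex.mul_conj]
    push_cast; ring
  simp only [h2] at h1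
  exact_mod_cast h1

/-- The number of Mathieu functions below `a` is bounded: `p + 1` zeros at equally spaced points
make the quadratic form nonnegative. -/
lemma MFam.card_le (h : MFam a b e g) (hb : 0 < b) {p : ℕ} (hp0 : 0 < p)
    (hp : a + b ≤ ((p:ℝ) / 2) ^ 2) : m ≤ p + 1 := by
  by_contra! hm
  have hp' : (0:ℝ) < p := by exact_mod_cast hp0
  -- More than `p + 1` functions have a nontrivial combination vanishing at `p + 1` given points.
  let F : (Fin m → ℂ) →ₗ[ℂ] (Fin (p + 1) → ℂ) :=
    { toFun := fun c j => ∑ i, c i * g i (-π + (j:ℕ) * (2 * π / p))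
      map_add' := fun c d => by ext j; simp [add_mul, Finset.sum_add_distrib]
      map_smul' := fun r c => by ext j; simp [Finset.mul_sum, mul_assoc] }
  have hker : F.ker ≠ ⊥ := LinearMap.ker_ne_bot_of_finrank_lt (by simpa using hm)
  obtain ⟨c, hc, hc0⟩ := (Submodule.ne_bot_iff _).1 hker
  have hv := h.comb_sp c
  set v := fun t => ∑ j, c j * g j t with hvdef
  have hz : ∀ j ≤ p, v (-π + (j:ℕ) * (2 * π / p)) = 0 := by
    intro j hj
    have := congrFun (LinearMap.mem_ker.1 hc) ⟨j, by omega⟩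
    simpa [F, v] using this
  have hD := dirichlet_ineq_chain (α := -π) (ℓ := 2 * π / p) (κ := p / 2) hv.hasDerivAt
    hv.deriv.continuous (by positivity) (by positivity) (le_of_eq (by field_simp)) p hz
  have e1 : -π + (p:ℝ) * (2 * π / p) = π := by field_simp; ring
  rw [e1] at hD
  have hcont := hv.continuous
  have hcont' := hv.deriv.continuous
  have hQ : 0 ≤ Qf a b v (deriv v) := by
    have h3 : ∫ t in (-π)..π, (‖deriv v t‖ ^ 2 - (p / 2 : ℝ) ^ 2 * ‖v t‖ ^ 2) ≤ Qf a b v (deriv v) := by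
      unfold Qf
      apply intervalIntegral.integral_mono_on (by linarith [pi_pos])
      · apply Continuous.intervalIntegrable; fun_prop
      · apply Continuous.intervalIntegrable; fun_prop
      · intro t _
        have : (a + b * Real.cos t) ≤ (p / 2 : ℝ) ^ 2 := by nlinarith [Real.cos_le_one t]
        gcongr
    rw [intervalIntegral.integral_sub (Continuous.intervalIntegrable (by fun_prop) _ _)
      (Continuous.intervalIntegrable (by fun_prop) _ _), intervalIntegral.integral_const_mul] at h3
    linarith
  rw [h.Qf_comb] at hQ
  have : ∑ i, (e i - a) * ‖c i‖ ^ 2 < 0 := by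
    obtain ⟨i, hi⟩ := Function.ne_iff.1 hc0
    apply Finset.sum_neg' (fun i _ => mul_nonpos_of_nonpos_of_nonneg (by linarith [h.lt i])
      (by positivity)) ⟨i, Finset.mem_univ i, ?_⟩
    have : 0 < ‖c i‖ := norm_pos_iff.2 hi
    exact mul_neg_of_neg_of_pos (by linarith [h.lt i]) (by positivity)
  linarith

end fam

lemma IsMathieuSol.smul {b e : ℝ} {g} (h : IsMathieuSol b e g) (c : ℂ) :
    IsMathieuSol b e (fun t => c * g t) := by
  refine ⟨contDiff_const.mul h.1, ((SP.const c).mul h.sp).2, fun t => ?_⟩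
  have h1 : deriv (fun t => c * g t) = fun t => c * deriv g t := by
    funext t; exact deriv_const_mul_field c
  rw [h1, deriv_const_mul_field]
  linear_combination c * h.2.2 t

lemma IsMathieuSol.add {b e : ℝ} {f g} (hf : IsMathieuSol b e f) (hg : IsMathieuSol b e g) :
    IsMathieuSol b e (fun t => f t + g t) := by
  refine ⟨hf.1.add hg.1, (hf.sp.add hg.sp).2, fun t => ?_⟩
  have h1 : deriv (fun t => f t + g t) = fun t => deriv f t + deriv g t := by
    funext t
    exact ((hf.sp.hasDerivAt t).add (hg.sp.hasDerivAt t)).deriv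
  have h2 : deriv (fun t => deriv f t + deriv g t) t = deriv (deriv f) t + deriv (deriv g) t :=
    ((hf.sp.deriv.hasDerivAt t).add (hg.sp.deriv.hasDerivAt t)).deriv
  rw [h1, h2]
  linear_combination hf.2.2 t + hg.2.2 t

lemma IsMathieuSol.zero (b e : ℝ) : IsMathieuSol b e (fun _ => 0) := by
  refine ⟨contDiff_const, fun _ => rfl, fun t => by simp⟩

lemma IsMathieuSol.sum {b e : ℝ} {ι} (s : Finset ι) {g : ι → ℝ → ℂ}
    (hg : ∀ i ∈ s, IsMathieuSol b e (g i)) : IsMathieuSol b e (fun t => ∑ i ∈ s, g i t) := by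
  classical
  induction s using Finset.induction_on with
  | empty => simpa using IsMathieuSol.zero b e
  | insert i s hi ih =>
    simp only [Finset.sum_insert hi]
    exact (hg i (Finset.mem_insert_self _ _)).add
      (ih fun j hj => hg j (Finset.mem_insert_of_mem hj))

/-- A Mathieu function below `a` orthogonal to a family extends that family after normalization. -/
lemma MFam.extend {a b : ℝ} {m : ℕ} {e : Fin m → ℝ} {g : Fin m → ℝ → ℂ} (h : MFam a b e g)
    {e' : ℝ} {f : ℝ → ℂ} (hf : IsMathieuSol b e' f) (he : e' < a) (hf0 : f ≠ 0)
    (ho : ∀ i, ip (g i) f = 0) :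
    ∃ (e₁ : Fin (m + 1) → ℝ) (g₁ : Fin (m + 1) → ℝ → ℂ), MFam a b e₁ g₁ := by
  set I := ∫ t in (-π)..π, ‖f t‖ ^ 2
  have hI : I ≠ 0 := by
    intro hI
    apply hf0
    refine eq_zero_of_ip hf.sp.continuous hf.sp.2 ?_
    rw [ip_self]; exact_mod_cast hI
  have hI0 : 0 < I := lt_of_le_of_ne (intervalIntegral_nonneg' fun t => by positivity) hI.symm
  set f₁ : ℝ → ℂ := fun t => ((1 / √I : ℝ) : ℂ) * f t
  have hs : IsMathieuSol b e' f₁ := hf.smul _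
  have h11 : ip f₁ f₁ = 1 := by
    simp only [f₁]
    rw [ip_smul, ip_smul_left, ip_self, Complex.conj_ofReal]
    norm_cast
    change 1 / √I * (1 / √I * I) = 1
    have : √I * √I = I := Real.mul_self_sqrt hI0.le
    have h0 : √I ≠ 0 := (Real.sqrt_pos.2 hI0).ne'
    field_simp
    nlinarith
  have ho1 : ∀ i, ip (g i) f₁ = 0 := fun i => by simp only [f₁]; rw [ip_smul, ho, mul_zero]
  have ho2 : ∀ i, ip f₁ (g i) = 0 := fun i => by rw [← ip_conj, ho1, map_zero]
  refine ⟨Fin.snoc e e', Fin.snoc (α := fun _ => ℝ → ℂ) g f₁, ?_, ?_, ?_⟩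
  · refine Fin.lastCases ?_ fun i => ?_
    · simpa using hs
    · simpa using h.sol i
  · refine Fin.lastCases ?_ fun i => ?_
    · simpa using he
    · simpa using h.lt i
  · refine Fin.lastCases ?_ fun i => ?_ <;> refine Fin.lastCases ?_ fun j => ?_
    · simpa using h11
    · simpa [(Fin.castSucc_lt_last j).ne'] using ho2 j
    · simpa [(Fin.castSucc_lt_last i).ne] using ho1 i
    · simpa using h.orth i j

/-- A family that cannot be enlarged. -/
lemma exists_maximal_MFam (a b : ℝ) (hb : 0 < b) :
    ∃ (m : ℕ) (e : Fin m → ℝ) (g : Fin m → ℝ → ℂ), MFam a b e g ∧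
      ∀ (e' : ℝ) (f : ℝ → ℂ), IsMathieuSol b e' f → e' < a → (∀ i, ip (g i) f = 0) → f = 0 := by
  by_contra! hc
  have hall : ∀ m : ℕ, ∃ (e : Fin m → ℝ) (g : Fin m → ℝ → ℂ), MFam a b e g := by
    intro m
    induction m with
    | zero => exact ⟨Fin.elim0, Fin.elim0, fun i => i.elim0, fun i => i.elim0, fun i => i.elim0⟩
    | succ m ih =>
      obtain ⟨e, g, h⟩ := ih
      obtain ⟨e', f, hf, he, ho, hf0⟩ := hc m e g h
      exact h.extend hf he hf0 ho
  obtain ⟨p, hp⟩ := exists_nat_gt (4 * |a + b| + 1)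
  have hp1 : (1:ℝ) < p := by nlinarith [abs_nonneg (a + b)]
  obtain ⟨e, g, h⟩ := hall (p + 2)
  have := h.card_le hb (p := p) (by exact_mod_cast (by linarith : (0:ℝ) < p))
    (by nlinarith [le_abs_self (a + b)])
  omega

/-! ### Spectral decomposition of the Mathieu operator below `a` -/

/-- For a maximal family, `M_b - a` is nonnegative on its orthogonal complement. -/
lemma gap_of_maximal {a b : ℝ} (hb : 0 < b) {m : ℕ} {e : Fin m → ℝ} {g : Fin m → ℝ → ℂ}
    (h : MFam a b e g)
    (hmax : ∀ (e' : ℝ) (f : ℝ → ℂ), IsMathieuSol b e' f → e' < a → (∀ i, ip (g i) f = 0) → f = 0)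
    {v : ℝ → ℂ} (hv : SP v) (hvo : ∀ i, ip (g i) v = 0) : 0 ≤ Qf a b v (deriv v) := by
  obtain ⟨J, hJ'⟩ := exists_fourier
  have hJ : IsFT J := hJ'
  obtain ⟨c, hc1, hc2⟩ : ∃ c : ℝ, b + 1 ≤ c ∧ 1 - a ≤ c :=
    ⟨max (b + 1) (1 - a), le_max_left _ _, le_max_right _ _⟩
  have hac : 0 < a + c := by linarith
  obtain ⟨K, hKc, hKs, hKp, hK1, hK2⟩ := exists_resolvent hb hc1
  have hpi := inv_two_pi_ne_zero
  -- the resolvent inverts `M_b + c` on smooth functions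
  have hcSP : ∀ u, SP u → SP (fun t => Mop b u t + (c:ℂ) * u t) := fun u hu =>
    (Mop_SP b hu).add ((SP.const _).mul hu)
  have hinv : ∀ u, SP u → K (J fun t => Mop b u t + (c:ℂ) * u t) = J u := by
    intro u hu
    have hu' := hcSP u hu
    apply hK1
    intro n
    rw [(hJ _ hu'.continuous hu'.2).1, (hJ _ hu.continuous hu.2).1, (hJ _ hu.continuous hu.2).1,
      (hJ _ hu.continuous hu.2).1, ip_add (fexp_SP n).continuous (Mop_SP b hu).continuous
      ((SP.const _).mul hu).continuous, ip_smul, ip_fexp_Mop hu]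
    ring
  have hginv : ∀ i, ((e i + c : ℝ) : ℂ) • K (J (g i)) = J (g i) := by
    intro i
    have hsp := (h.sol i).sp
    have := hinv (g i) hsp
    have h2 : (J fun t => Mop b (g i) t + (c:ℂ) * g i t) = ((e i + c : ℝ) : ℂ) • J (g i) := by
      ext n
      have hu' := hcSP _ hsp
      rw [(hJ _ hu'.continuous hu'.2).1, lp.coeFn_smul, Pi.smul_apply,
        (hJ _ hsp.continuous hsp.2).1, (isMathieuSol_iff.1 (h.sol i)).2, smul_eq_mul,
        ip_add (fexp_SP n).continuous ((SP.const _).mul hsp).continuous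
        ((SP.const _).mul hsp).continuous, ip_smul, ip_smul]
      push_cast; ring
    rw [h2, map_smul] at this
    exact this
  let Y : Submodule ℂ L2Z := (Submodule.span ℂ (Set.range fun i => J (g i)))ᗮ
  have hYmem : ∀ y, y ∈ Y ↔ ∀ i, inner ℂ (J (g i)) y = 0 := by
    intro y
    constructor
    · intro hy i
      exact (Submodule.mem_orthogonal _ _).1 hy _ (Submodule.subset_span ⟨i, rfl⟩)
    · intro hy
      rw [Submodule.mem_orthogonal]
      intro u hu
      induction hu using Submodule.span_induction with
      | mem x hx => obtain ⟨i, rfl⟩ := hx; exact hy i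
      | zero => simp
      | add x y _ _ h1 h2 => rw [inner_add_left, h1, h2, add_zero]
      | smul r x _ h1 => rw [inner_smul_left, h1, mul_zero]
  have hYinv : ∀ y ∈ Y, K y ∈ Y := by
    intro y hy
    rw [hYmem] at hy ⊢
    intro i
    have h1 : inner ℂ (K (J (g i))) y = inner ℂ (J (g i)) (K y) := hKs _ _
    have h2 := hy i
    rw [← hginv i, inner_smul_left, h1, mul_eq_zero] at h2
    rcases h2 with h2 | h2
    · have h3 : ((e i + c : ℝ) : ℂ) = 0 := by simpa using h2
      rw [← hginv i, h3, zero_smul, inner_zero_left]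
    · exact h2
  have hδ : 0 < 1 / (a + c) := by positivity
  -- An eigenvalue of `K` above `1 / (a + c)` on the complement would be `1 / (e + c)` for a Mathieu
  -- eigenvalue `e < a`, against maximality.
  have hbound : ∀ (μ : ℂ), ∀ y ∈ Y, y ≠ 0 → K y = μ • y → ‖μ‖ ≤ 1 / (a + c) := by
    intro μ y hy hy0 hKy
    have hreal : (starRingEnd ℂ) μ = μ := by
      have h1 : inner ℂ (K y) y = inner ℂ y (K y) := hKs _ _
      rw [hKy, inner_smul_left, inner_smul_right] at h1
      exact mul_right_cancel₀ (inner_self_ne_zero.2 hy0) h1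
    obtain ⟨r, rfl⟩ := Complex.conj_eq_iff_real.1 hreal
    have hr : r ≠ 0 := by
      rintro rfl
      apply hy0
      ext n
      have := hK2 y n
      rw [hKy] at this
      simpa using this.symm
    by_contra! hgt
    rw [Complex.norm_real, Real.norm_eq_abs] at hgt
    have hrec : ∀ n : ℤ, ((n:ℂ) ^ 2 + c) * y n - (b / 2) * (y (n + 1) + y (n - 1))
        = ((r⁻¹ : ℝ) : ℂ) * y n := by
      intro n
      have := hK2 y n
      rw [hKy] at this
      simp only [lp.coeFn_smul, Pi.smul_apply, smul_eq_mul] at this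
      have hr' : (r:ℂ) ≠ 0 := by exact_mod_cast hr
      have h3 : (r:ℂ) * (((n:ℂ) ^ 2 + c) * y n - (b / 2) * (y (n + 1) + y (n - 1))) = y n := by
        linear_combination this
      rw [Complex.ofReal_inv, eq_inv_mul_iff_mul_eq₀ hr', h3]
    obtain ⟨f, hf, hfy⟩ := eigen_to_sol hJ hrec
    have hlt : r⁻¹ - c < a := by
      rcases lt_or_gt_of_ne hr with hr1 | hr1
      · have := inv_lt_zero.2 hr1
        linarith
      · rw [abs_of_pos hr1, one_div] at hgt
        have := (inv_lt_comm₀ hac hr1).1 hgt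
        linarith
    have hf0 : f = 0 := by
      refine hmax _ f hf hlt fun i => ?_
      have h1 := (hYmem y).1 hy i
      rw [← hfy, (hJ _ (h.sol i).sp.continuous (h.sol i).sp.2).2 _ hf.sp.continuous hf.sp.2] at h1
      exact (mul_eq_zero.1 h1).resolve_left hpi
    apply hy0
    rw [← hfy]
    ext n
    rw [(hJ _ hf.sp.continuous hf.sp.2).1, hf0]
    simp [ip]
  have hnorm := norm_le_of_eigen_bound hKc hKs hδ.le Y (Submodule.isClosed_orthogonal _) hYinv hbound
  set w := J fun t => Mop b v t + (c:ℂ) * v t with hw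
  have hv' := hcSP v hv
  have hKw : K w = J v := hinv v hv
  have hwY : w ∈ Y := by
    rw [hYmem]
    intro i
    rw [(hJ _ (h.sol i).sp.continuous (h.sol i).sp.2).2 _ hv'.continuous hv'.2,
      ip_add (h.sol i).sp.continuous (Mop_SP b hv).continuous ((SP.const _).mul hv).continuous,
      ip_smul, h.ip_Mop i hv, hvo]
    simp
  have hfin := sq_norm_le_of_pos hKs hKp hδ (hnorm _ (hYinv w hwY))
  rw [hKw] at hfin
  have e1 : ‖J v‖ ^ 2 = 1 / (2 * π) * (∫ t in (-π)..π, ‖v t‖ ^ 2) := by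
    have h1 := (hJ _ hv.continuous hv.2).2 _ hv.continuous hv.2
    rw [ip_self, inner_self_eq_norm_sq_to_K] at h1
    apply Complex.ofReal_injective
    push_cast at h1 ⊢
    exact h1
  have e2 : (inner ℂ (J v) w).re = 1 / (2 * π) * (Qf a b v (deriv v)
      + (a + c) * (∫ t in (-π)..π, ‖v t‖ ^ 2)) := by
    have h1 := (hJ _ hv.continuous hv.2).2 _ hv'.continuous hv'.2
    rw [ip_add hv.continuous (Mop_SP b hv).continuous ((SP.const _).mul hv).continuous,
      ip_smul] at h1
    have h2 := Qf_eq (a := a) (b := b) hv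
    have h3 : ip v (Mop b v) + c * ip v v = ((Qf a b v (deriv v)
      + (a + c) * (∫ t in (-π)..π, ‖v t‖ ^ 2) : ℝ) : ℂ) := by
      push_cast
      rw [h2, ip_self]; ring
    rw [h3] at h1
    rw [h1]
    norm_cast
  rw [e1, e2] at hfin
  have h2π : 0 < 1 / (2 * π) := by positivity
  have h5 : (∫ t in (-π)..π, ‖v t‖ ^ 2) ≤ 1 / (a + c) * (Qf a b v (deriv v)
      + (a + c) * (∫ t in (-π)..π, ‖v t‖ ^ 2)) := by
    have := hfin
    rw [mul_left_comm] at this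
    exact le_of_mul_le_mul_left this h2π
  rw [one_div, ← div_eq_inv_mul, le_div_iff₀ hac] at h5
  linarith

/-- For a maximal family, the multiplicity of an eigenvalue below `a` counts its occurrences. -/
lemma mult_of_maximal {a b : ℝ} {m : ℕ} {e : Fin m → ℝ} {g : Fin m → ℝ → ℂ}
    (h : MFam a b e g)
    (hmax : ∀ (e' : ℝ) (f : ℝ → ℂ), IsMathieuSol b e' f → e' < a → (∀ i, ip (g i) f = 0) → f = 0)
    {e' : ℝ} (he : e' < a) : mathieuMult b e' = (Finset.univ.filter fun i => e i = e').card := by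
  let G : {i // e i = e'} → ℝ → ℂ := fun i => g i
  have hli : LinearIndependent ℂ G := by
    rw [Fintype.linearIndependent_iff]
    intro c hc i
    have h1 : ip (g i) (fun t => ∑ j : {i // e i = e'}, c j * g j t) = c i := by
      rw [ip_sum (g := fun (j : {i // e i = e'}) t => c j * g j t) (h.sol i).sp.continuous
        (fun j => continuous_const.mul (h.sol j).sp.continuous)]
      simp [ip_smul, h.orth, Subtype.val_inj]
    rw [← h1]
    have h2 : (fun t => ∑ j : {i // e i = e'}, c j * g j t) = 0 := by
      rw [← hc]; ext t; simp [G]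
    rw [h2]; simp [ip]
  have hspan : Submodule.span ℂ {g : ℝ → ℂ | IsMathieuSol b e' g}
      = Submodule.span ℂ (Set.range G) := by
    apply le_antisymm
    · rw [Submodule.span_le]
      intro f hf
      have hf' : IsMathieuSol b e' f := hf
      have hs : IsMathieuSol b e' (fun t => ∑ j : {i // e i = e'}, ip (g j) f * g j t) := by
        apply IsMathieuSol.sum
        intro j _
        have := h.sol j
        rw [j.2] at this
        exact this.smul _
      have hd := hf'.add (hs.smul (-1))
      have h0 := hmax e' _ hd he (fun i => by
        rw [ip_add (h.sol i).sp.continuous hf'.sp.continuous (hs.smul (-1)).sp.continuous, ip_smul,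
          ip_sum (g := fun (j : {i // e i = e'}) t => ip (g j) f * g j t) (h.sol i).sp.continuous
            (fun j => continuous_const.mul (h.sol j).sp.continuous)]
        simp only [ip_smul, h.orth, mul_ite, mul_one, mul_zero]
        by_cases hi : e i = e'
        · rw [Finset.sum_eq_single (⟨i, hi⟩ : {i // e i = e'})]
          · simp
          · intro j _ hj
            rw [if_neg]
            intro hij
            exact hj (Subtype.ext hij.symm)
          · simp
        · have h1 : ip (g i) f = 0 := by
            have h2 := h.ip_Mop i hf'.sp
            rw [(isMathieuSol_iff.1 hf').2, ip_smul] at h2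
            have h3 : ((e i : ℂ) - e') * ip (g i) f = 0 := by linear_combination -h2
            refine (mul_eq_zero.1 h3).resolve_left ?_
            rw [sub_eq_zero]
            exact_mod_cast hi
          rw [h1, Finset.sum_eq_zero]
          · simp
          · intro j _
            rw [if_neg]
            rintro rfl
            exact hi j.2)
      have h1 : f = ∑ j : {i // e i = e'}, ip (g j) f • G j := by
        ext t
        have := congrFun h0 t
        simp only [Pi.zero_apply] at this
        simp only [Finset.sum_apply, Pi.smul_apply, smul_eq_mul, G]
        linear_combination this
      rw [h1]
      exact Submodule.sum_mem _ fun j _ =>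
        Submodule.smul_mem _ _ (Submodule.subset_span ⟨j, rfl⟩)
    · apply Submodule.span_mono
      rintro _ ⟨i, rfl⟩
      have := h.sol i
      rw [i.2] at this
      exact this
  unfold mathieuMult
  rw [hspan, finrank_span_eq_card hli, Fintype.card_subtype]

/-- Spectral decomposition of the Mathieu operator below `a`. -/
theorem mathieu_spectral (a b : ℝ) (hb : 0 < b) :
    ∃ (m : ℕ) (e : Fin m → ℝ) (g : Fin m → ℝ → ℂ), MFam a b e g ∧
      (∀ v, SP v → (∀ i, ip (g i) v = 0) → 0 ≤ Qf a b v (deriv v)) ∧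
      ∑' e : {e : ℝ // IsMathieuEV b e ∧ e < a}, (mathieuMult b e : ℝ) * Real.sqrt (a - (e : ℝ))
        = ∑ i, √(a - e i) := by
  classical
  obtain ⟨m, e, g, h, hmax⟩ := exists_maximal_MFam a b hb
  refine ⟨m, e, g, h, fun v hv hvo => gap_of_maximal hb h hmax hv hvo, ?_⟩
  have hset : {e : ℝ | IsMathieuEV b e ∧ e < a} = ((Finset.univ.image e : Finset ℝ) : Set ℝ) := by
    ext x
    simp only [Set.mem_ofPred_eq, Finset.coe_image, Finset.coe_univ, Set.image_univ, Set.mem_range]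
    constructor
    · rintro ⟨⟨f, hf0, hf⟩, hx⟩
      by_contra! hne
      refine hf0 (hmax x f hf hx fun i => ?_)
      have h2 := h.ip_Mop i hf.sp
      rw [(isMathieuSol_iff.1 hf).2, ip_smul] at h2
      have h3 : ((e i : ℂ) - x) * ip (g i) f = 0 := by linear_combination -h2
      refine (mul_eq_zero.1 h3).resolve_left ?_
      rw [sub_eq_zero]
      exact_mod_cast hne i
    · rintro ⟨i, rfl⟩
      refine ⟨⟨g i, ?_, h.sol i⟩, h.lt i⟩
      intro h0
      have := h.orth i i
      rw [h0] at this
      simp [ip] at this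
  change ∑' x : ({e : ℝ | IsMathieuEV b e ∧ e < a} : Set ℝ),
    (mathieuMult b x : ℝ) * √(a - (x:ℝ)) = _
  rw [hset, Finset.tsum_subtype' _ (fun x => (mathieuMult b x : ℝ) * √(a - x)),
    Finset.sum_comp (fun x => √(a - x)) e]
  apply Finset.sum_congr rfl
  intro x hx
  obtain ⟨i, _, rfl⟩ := Finset.mem_image.1 hx
  rw [mult_of_maximal h hmax (h.lt i), nsmul_eq_mul]

/-! ### The quadratic form in logarithmic polar coordinates -/

/-- The point of the plane with polar radius `r` and angle `t`. -/
def polPt (r t : ℝ) : E2 := !₂[r * Real.cos t, r * Real.sin t]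

lemma polPt_zero (r t : ℝ) : (polPt r t) 0 = r * Real.cos t := by simp [polPt]

lemma polPt_one (r t : ℝ) : (polPt r t) 1 = r * Real.sin t := by simp [polPt]

lemma polPt_eq (r t : ℝ) : polPt r t = (r * Real.cos t) • EuclideanSpace.single (0 : Fin 2) (1:ℝ)
    + (r * Real.sin t) • EuclideanSpace.single (1 : Fin 2) (1:ℝ) := by
  ext i
  fin_cases i <;> simp [polPt]

lemma norm_polPt (r t : ℝ) : ‖polPt r t‖ = |r| := by
  rw [EuclideanSpace.norm_eq, Fin.sum_univ_two, polPt_zero, polPt_one, ← Real.sqrt_sq_eq_abs]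
  congr 1
  simp only [Real.norm_eq_abs, sq_abs]
  nlinarith [Real.sin_sq_add_cos_sq t]

lemma continuous_polPt : Continuous fun p : ℝ × ℝ => polPt p.1 p.2 := by
  simp only [polPt_eq]
  fun_prop

lemma contDiff_polPt : ContDiff ℝ (⊤ : ℕ∞) fun p : ℝ × ℝ => polPt p.1 p.2 := by
  simp only [polPt_eq]
  have h1 := Real.contDiff_cos (n := (⊤ : ℕ∞))
  have h2 := Real.contDiff_sin (n := (⊤ : ℕ∞))
  fun_prop

/-- Integration in logarithmic polar coordinates for functions supported in a shell. -/
lemma integral_polar {G : E2 → ℝ} (hG : Continuous G) {S : ℝ} (hS : 0 ≤ S)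
    (h1 : ∀ x, ‖x‖ ≤ 1 → G x = 0) (h2 : ∀ x, exp S ≤ ‖x‖ → G x = 0) :
    ∫ x, G x = ∫ s in (0:ℝ)..S, ∫ t in (-π)..π, exp (2 * s) * G (polPt (exp s) t) := by
  have e1 : ∫ x, G x = ∫ z : ℂ, G (Complex.orthonormalBasisOneI.repr z) :=
    (((LinearIsometryEquiv.measurePreserving (Complex.orthonormalBasisOneI.repr)).integral_comp
      (Complex.orthonormalBasisOneI.repr).toHomeomorph.measurableEmbedding) G).symm
  have e2 : ∀ p : ℝ × ℝ, Complex.orthonormalBasisOneI.repr (Complex.polarCoord.symm p)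
      = polPt p.1 p.2 := by
    intro p
    ext i
    fin_cases i <;> simp [polPt, Complex.polarCoord_symm_apply, Complex.cos_ofReal_re,
      Complex.sin_ofReal_re]
  have hc : Continuous fun p : ℝ × ℝ => p.1 * G (polPt p.1 p.2) :=
    continuous_fst.mul (hG.comp continuous_polPt)
  have hexp : 1 ≤ exp S := Real.one_le_exp hS
  have e3 : ∫ x, G x = ∫ p in Set.Ioc 1 (exp S) ×ˢ Set.Ioo (-π) π, p.1 * G (polPt p.1 p.2) := by
    rw [e1, ← Complex.integral_comp_polarCoord_symm]
    simp only [e2, smul_eq_mul, polarCoord_target]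
    apply setIntegral_eq_of_subset_of_forall_sdiff_eq_zero
    · exact measurableSet_Ioi.prod measurableSet_Ioo
    · exact Set.prod_mono (fun r hr => lt_trans one_pos hr.1) subset_rfl
    · rintro ⟨r, t⟩ ⟨⟨hr, ht⟩, hn⟩
      simp only [Set.mem_prod, Set.mem_Ioc, Set.mem_Ioi] at hr ht hn
      have hr' : ‖polPt r t‖ = r := by rw [norm_polPt, abs_of_pos hr]
      have : r ≤ 1 ∨ exp S ≤ r := by
        by_contra! hcon
        exact hn ⟨⟨hcon.1, hcon.2.le⟩, ht⟩
      rcases this with h | h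
      · simp [h1 (polPt r t) (by rw [hr']; exact h)]
      · simp [h2 (polPt r t) (by rw [hr']; exact h)]
  have hpi : -π ≤ π := by linarith [pi_pos]
  have e4 : ∫ x, G x = ∫ r in (1:ℝ)..exp S, ∫ t in (-π)..π, r * G (polPt r t) := by
    rw [e3, Measure.volume_eq_prod, setIntegral_prod, intervalIntegral.integral_of_le hexp]
    · simp only [intervalIntegral.integral_of_le hpi, integral_Ioc_eq_integral_Ioo]
    · exact (hc.continuousOn.integrableOn_compact
        (isCompact_Icc.prod isCompact_Icc)).mono_set
        (Set.prod_mono Set.Ioc_subset_Icc_self Set.Ioo_subset_Icc_self)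
  have hcg : Continuous fun r : ℝ => ∫ t in (-π)..π, r * G (polPt r t) :=
    intervalIntegral.continuous_parametric_intervalIntegral_of_continuous' hc _ _
  have e5 := intervalIntegral.integral_comp_mul_deriv (a := 0) (b := S) (f := exp) (f' := exp)
    (fun x _ => Real.hasDerivAt_exp x) Real.continuous_exp.continuousOn hcg
  rw [e4]
  rw [Real.exp_zero] at e5
  rw [← e5]
  congr 1; ext s
  simp only [Function.comp]
  rw [← intervalIntegral.integral_mul_const]
  congr 1; ext t
  rw [two_mul, Real.exp_add]; ring

/-- Test functions: smooth with compact support in the exterior of the closed unit disc. -/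
def Adm (ψ : E2 → ℂ) : Prop :=
  ContDiff ℝ (⊤ : ℕ∞) ψ ∧ HasCompactSupport ψ ∧ tsupport ψ ⊆ {x : E2 | 1 < ‖x‖}

/-- The quadratic form `q_E`. -/
def qform (a b E : ℝ) (ψ : E2 → ℂ) : ℝ := ∫ x in {x : E2 | 1 < ‖x‖},
  ((∑ j : Fin 2, ‖fderiv ℝ ψ x (EuclideanSpace.single j 1)‖ ^ 2)
    - ((a + b * x 0 / ‖x‖) / ‖x‖ ^ 2) * ‖ψ x‖ ^ 2 - E * ‖ψ x‖ ^ 2)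

lemma polPt_hasDerivAt_log (s t : ℝ) :
    HasDerivAt (fun s => polPt (exp s) t) (polPt (exp s) t) s := by
  simp only [polPt_eq]
  exact (((Real.hasDerivAt_exp s).mul_const _).smul_const _).add
    (((Real.hasDerivAt_exp s).mul_const _).smul_const _)

lemma polPt_hasDerivAt_ang (r t : ℝ) :
    HasDerivAt (fun t => polPt r t) ((-(r * Real.sin t)) • EuclideanSpace.single (0 : Fin 2) (1:ℝ)
    + (r * Real.cos t) • EuclideanSpace.single (1 : Fin 2) (1:ℝ)) t := by
  rw [show polPt r = fun t => _ from funext fun t => polPt_eq r t]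
  have h1 := (((Real.hasDerivAt_cos t).const_mul r).smul_const
    (EuclideanSpace.single (0 : Fin 2) (1:ℝ))).add
    (((Real.hasDerivAt_sin t).const_mul r).smul_const (EuclideanSpace.single (1 : Fin 2) (1:ℝ)))
  rw [mul_neg] at h1
  exact h1

lemma rot_norm_sq (r c s : ℝ) (h : s ^ 2 + c ^ 2 = 1) (z w : ℂ) :
    ‖((r * c : ℝ) : ℂ) * z + ((r * s : ℝ) : ℂ) * w‖ ^ 2 +
      ‖((-(r * s) : ℝ) : ℂ) * z + ((r * c : ℝ) : ℂ) * w‖ ^ 2 = r ^ 2 * (‖z‖ ^ 2 + ‖w‖ ^ 2) := by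
  simp only [← Complex.normSq_eq_norm_sq, Complex.normSq_apply, Complex.add_re, Complex.add_im,
    Complex.mul_re, Complex.mul_im, Complex.ofReal_re, Complex.ofReal_im]
  linear_combination (r ^ 2 * (z.re ^ 2 + z.im ^ 2 + w.re ^ 2 + w.im ^ 2)) * h

lemma Adm.zero_of_norm_le {ψ} (h : Adm ψ) {x : E2} (hx : ‖x‖ ≤ 1) : x ∉ tsupport ψ :=
  fun hm => absurd (h.2.2 hm) (not_lt.2 hx)

lemma Adm.exists_bound {ψ} (h : Adm ψ) :
    ∃ S0 : ℝ, ∀ S, S0 ≤ S → 0 ≤ S ∧ ∀ x : E2, exp S ≤ ‖x‖ → x ∉ tsupport ψ := by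
  obtain ⟨R, hR⟩ := h.2.1.isBounded.exists_norm_le
  refine ⟨max R 0, fun S hS => ⟨(le_max_right _ _).trans hS, fun x hx hm => ?_⟩⟩
  have h1 := hR x hm
  have h2 : R ≤ S := (le_max_left _ _).trans hS
  have h3 := Real.add_one_le_exp S
  linarith

/-- The form `q_E` in logarithmic polar coordinates `|x| = e^s`. -/
lemma qform_polar {a b E : ℝ} {ψ : E2 → ℂ} (h : Adm ψ) {S : ℝ} (hS : 0 ≤ S)
    (h2 : ∀ x : E2, exp S ≤ ‖x‖ → x ∉ tsupport ψ) :
    qform a b E ψ = ∫ s in (0:ℝ)..S, ∫ t in (-π)..π,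
      (‖deriv (fun s => ψ (polPt (exp s) t)) s‖ ^ 2 + ‖deriv (fun t => ψ (polPt (exp s) t)) t‖ ^ 2
        - (a + b * Real.cos t) * ‖ψ (polPt (exp s) t)‖ ^ 2
        - E * exp (2 * s) * ‖ψ (polPt (exp s) t)‖ ^ 2) := by
  set G : E2 → ℝ := fun x => (∑ j : Fin 2, ‖fderiv ℝ ψ x (EuclideanSpace.single j 1)‖ ^ 2)
    - ((a + b * x 0 / ‖x‖) / ‖x‖ ^ 2) * ‖ψ x‖ ^ 2 - E * ‖ψ x‖ ^ 2 with hGdef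
  have hsupp : ∀ x, x ∉ tsupport ψ → G x = 0 := by
    intro x hx
    have e1 : ψ x = 0 := image_eq_zero_of_notMem_tsupport hx
    have e2 : fderiv ℝ ψ x = 0 := by
      by_contra hne
      exact hx (support_fderiv_subset ℝ hne)
    simp [hGdef, e1, e2]
  have hGc : Continuous G := by
    have e : G = fun x => (∑ j : Fin 2, ‖fderiv ℝ ψ x (EuclideanSpace.single j 1)‖ ^ 2)
        - ((a + b * x 0 / max ‖x‖ 1) / (max ‖x‖ 1) ^ 2) * ‖ψ x‖ ^ 2 - E * ‖ψ x‖ ^ 2 := by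
      funext x
      by_cases hx : ‖x‖ ≤ 1
      · simp [hGdef, image_eq_zero_of_notMem_tsupport (h.zero_of_norm_le hx)]
      · rw [max_eq_left (not_le.1 hx).le]
    rw [e]
    have c1 : Continuous (fderiv ℝ ψ) := h.1.continuous_fderiv (by simp)
    have c2 : Continuous ψ := h.1.continuous
    have hm : ∀ x : E2, max ‖x‖ 1 ≠ 0 := fun x => (lt_max_of_lt_right one_pos).ne'
    have hm2 : ∀ x : E2, (max ‖x‖ 1) ^ 2 ≠ 0 := fun x => pow_ne_zero _ (hm x)
    have c3 : Continuous fun x : E2 => max ‖x‖ 1 := by fun_prop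
    have c4 : Continuous fun x : E2 => x 0 := by fun_prop
    refine ((continuous_finsetSum _ fun j _ => ?_).sub ((((continuous_const.add
      ((continuous_const.mul c4).div c3 hm)).div (c3.pow 2) hm2)).mul (c2.norm.pow 2))).sub
      (continuous_const.mul (c2.norm.pow 2))
    exact (c1.clm_apply continuous_const).norm.pow 2
  have e1 : qform a b E ψ = ∫ x, G x := by
    unfold qform
    apply setIntegral_eq_integral_of_forall_compl_eq_zero
    intro x hx
    exact hsupp x (h.zero_of_norm_le (not_lt.1 hx))
  rw [e1, integral_polar hGc hS (fun x hx => hsupp x (h.zero_of_norm_le hx))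
    (fun x hx => hsupp x (h2 x hx))]
  congr 1; ext s
  congr 1; ext t
  have hd : DifferentiableAt ℝ ψ (polPt (exp s) t) := (h.1.differentiable (by simp)) _
  have d1 : deriv (fun s => ψ (polPt (exp s) t)) s =
      ((exp s * Real.cos t : ℝ) : ℂ) * fderiv ℝ ψ (polPt (exp s) t) (EuclideanSpace.single 0 1) +
      ((exp s * Real.sin t : ℝ) : ℂ) * fderiv ℝ ψ (polPt (exp s) t) (EuclideanSpace.single 1 1) := by
    refine (hd.hasFDerivAt.comp_hasDerivAt s (polPt_hasDerivAt_log s t)).deriv.trans ?_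
    conv_lhs => arg 2; rw [polPt_eq]
    rw [map_add, map_smul, map_smul]
    simp only [Complex.real_smul]
  have d2 : deriv (fun t => ψ (polPt (exp s) t)) t =
      ((-(exp s * Real.sin t) : ℝ) : ℂ) * fderiv ℝ ψ (polPt (exp s) t) (EuclideanSpace.single 0 1) +
      ((exp s * Real.cos t : ℝ) : ℂ) * fderiv ℝ ψ (polPt (exp s) t) (EuclideanSpace.single 1 1) := by
    refine (hd.hasFDerivAt.comp_hasDerivAt t (polPt_hasDerivAt_ang (exp s) t)).deriv.trans ?_
    rw [map_add, map_smul, map_smul]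
    simp only [Complex.real_smul]
  rw [d1, d2, rot_norm_sq _ _ _ (Real.sin_sq_add_cos_sq t)]
  simp only [hGdef, norm_polPt, polPt_zero, Fin.sum_univ_two, abs_of_pos (exp_pos s)]
  have hne := (exp_pos s).ne'
  rw [two_mul, Real.exp_add]
  field_simp

/-! ### Separation of variables -/

section Bessel

variable {a b : ℝ} {m : ℕ} {e : Fin m → ℝ} {g : Fin m → ℝ → ℂ}

lemma MFam.cont (h : MFam a b e g) (i : Fin m) : Continuous (g i) := (h.sol i).sp.continuous

lemma conj_mul_self (z : ℂ) : (starRingEnd ℂ) z * z = ((‖z‖ ^ 2 : ℝ) : ℂ) := by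
  rw [mul_comm, Complex.mul_conj, Complex.normSq_eq_norm_sq]

/-- Subtracting the projection leaves a function orthogonal to the family. -/
lemma MFam.ip_rem (h : MFam a b e g) {v : ℝ → ℂ} (hv : Continuous v) (i : Fin m) :
    ip (g i) (fun t => v t - ∑ j, ip (g j) v * g j t) = 0 := by
  rw [ip_sub (h.cont i) hv (h.comb_sp _).continuous, h.ip_comb, sub_self]

/-- Pythagoras for the orthogonal projection onto the span of the family. -/
lemma MFam.ip_split (h : MFam a b e g) {v : ℝ → ℂ} (hv : Continuous v) :
    ip v v = ip (fun t => v t - ∑ j, ip (g j) v * g j t) (fun t => v t - ∑ j, ip (g j) v * g j t)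
      + ((∑ i, ‖ip (g i) v‖ ^ 2 : ℝ) : ℂ) := by
  set p := fun t => ∑ j, ip (g j) v * g j t with hp
  have hpc : Continuous p := (h.comb_sp _).continuous
  set w := fun t => v t - ∑ j, ip (g j) v * g j t with hw
  have hwc : Continuous w := hv.sub hpc
  have hvw : v = fun t => w t + p t := by funext t; simp [hw, hp]
  have hpw : ip p w = 0 := by
    rw [hp, ip_comb_left h.cont _ hwc]
    exact Finset.sum_eq_zero fun j _ => by rw [h.ip_rem hv, mul_zero]
  have hpv : ip p v = ((∑ i, ‖ip (g i) v‖ ^ 2 : ℝ) : ℂ) := by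
    rw [hp, ip_comb_left h.cont _ hv]
    push_cast
    exact Finset.sum_congr rfl fun j _ => by rw [conj_mul_self]; push_cast; rfl
  have hwp : ip w p = 0 := by rw [← ip_conj, hpw, map_zero]
  have h1 : ip v v = ip w v + ip p v := by
    conv_lhs => enter [1]; rw [hvw]
    rw [ip_add_left hv hwc hpc]
  have h2 : ip w v = ip w w + ip w p := by
    conv_lhs => enter [2]; rw [hvw]
    rw [ip_add hwc hwc hpc]
  rw [h1, h2, hpv, hwp, add_zero]

/-- Bessel's inequality. -/
lemma MFam.bessel (h : MFam a b e g) {v : ℝ → ℂ} (hv : Continuous v) :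
    ∑ i, ‖ip (g i) v‖ ^ 2 ≤ ∫ t in (-π)..π, ‖v t‖ ^ 2 := by
  have h1 := h.ip_split hv
  rw [ip_self, ip_self] at h1
  have h2 : (∫ t in (-π)..π, ‖v t‖ ^ 2) = (∫ t in (-π)..π, ‖v t - ∑ j, ip (g j) v * g j t‖ ^ 2)
      + ∑ i, ‖ip (g i) v‖ ^ 2 := by exact_mod_cast h1
  rw [h2]
  linarith [intervalIntegral_nonneg' (f := fun t => ‖v t - ∑ j, ip (g j) v * g j t‖ ^ 2)
    fun t => by positivity]

/-- The angular form is bounded below by its diagonal part on a family with spectral gap. -/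
lemma MFam.Qf_ge (h : MFam a b e g)
    (hgap : ∀ v, SP v → (∀ i, ip (g i) v = 0) → 0 ≤ Qf a b v (deriv v))
    {v : ℝ → ℂ} (hv : SP v) :
    ∑ i, (e i - a) * ‖ip (g i) v‖ ^ 2 ≤ Qf a b v (deriv v) := by
  have hpS := h.comb_sp fun j => ip (g j) v
  set p := fun t => ∑ j, ip (g j) v * g j t with hp
  have hwS : SP fun t => v t - ∑ j, ip (g j) v * g j t := hv.sub hpS
  have hsplit := h.ip_split hv.continuous
  have hrem := h.ip_rem hv.continuous
  set w := fun t => v t - ∑ j, ip (g j) v * g j t with hw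
  have hwc := hwS.continuous
  have hpc : Continuous p := hpS.continuous
  have hvw : v = fun t => w t + p t := by funext t; simp [hw, hp]
  have hMw := (Mop_SP b hwS).continuous
  have hMv := (Mop_SP b hv).continuous
  have h1 : ip v (Mop b v) = ip w (Mop b v) + ip p (Mop b v) := by
    conv_lhs => enter [1]; rw [hvw]
    rw [ip_add_left hMv hwc hpc]
  have h2 : ip (Mop b w) v = ip (Mop b w) w + ip (Mop b w) p := by
    conv_lhs => enter [2]; rw [hvw]
    rw [ip_add hMw hwc hpc]
  have h3 : ip p (Mop b w) = 0 := by
    rw [hp, ip_comb_left h.cont _ hMw]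
    exact Finset.sum_eq_zero fun j _ => by rw [h.ip_Mop j hwS, hrem, mul_zero, mul_zero]
  have h4 : ip p (Mop b v) = ((∑ i, e i * ‖ip (g i) v‖ ^ 2 : ℝ) : ℂ) := by
    rw [hp, ip_comb_left h.cont _ hMv]
    push_cast
    refine Finset.sum_congr rfl fun j _ => ?_
    have := conj_mul_self (ip (g j) v)
    push_cast at this
    rw [h.ip_Mop j hv, ← this]; ring
  have h5 : ip (Mop b w) p = 0 := by rw [← ip_conj, h3, map_zero]
  have h6 := Qf_eq (a := a) (b := b) hv
  have h7 := Qf_eq (a := a) (b := b) hwS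
  rw [h1, ← ip_Mop_symm hwS hv, h2, h5, add_zero, h4, ip_Mop_symm hwS hwS, hsplit] at h6
  have h8 : (Qf a b v (deriv v) : ℂ) = ((Qf a b w (deriv w) +
      (∑ i, (e i - a) * ‖ip (g i) v‖ ^ 2) : ℝ) : ℂ) := by
    have e0 : (∑ i, (e i - a) * ‖ip (g i) v‖ ^ 2 : ℝ) =
        ∑ i, e i * ‖ip (g i) v‖ ^ 2 - a * ∑ i, ‖ip (g i) v‖ ^ 2 := by
      rw [Finset.mul_sum, ← Finset.sum_sub_distrib]
      exact Finset.sum_congr rfl fun j _ => by ring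
    rw [e0, Complex.ofReal_add, h6, h7, Complex.ofReal_sub, Complex.ofReal_mul]
    ring
  have h9 : Qf a b v (deriv v) = Qf a b w (deriv w) +
      (∑ i, (e i - a) * ‖ip (g i) v‖ ^ 2) := by exact_mod_cast h8
  linarith [hgap w hwS hrem]

end Bessel

section Separation

variable {Φ : ℝ → ℝ → ℂ}

lemma slice_hasDerivAt (hΦ : ContDiff ℝ (⊤ : ℕ∞) fun p : ℝ × ℝ => Φ p.1 p.2) (s t : ℝ) :
    HasDerivAt (fun s => Φ s t) (fderiv ℝ (fun p : ℝ × ℝ => Φ p.1 p.2) (s, t) (1, 0)) s := by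
  have hd : DifferentiableAt ℝ (fun p : ℝ × ℝ => Φ p.1 p.2) (s, t) :=
    (hΦ.differentiable (by simp)) _
  exact hd.hasFDerivAt.comp_hasDerivAt s ((hasDerivAt_id s).prodMk (hasDerivAt_const s t))

lemma slice_deriv_continuous (hΦ : ContDiff ℝ (⊤ : ℕ∞) fun p : ℝ × ℝ => Φ p.1 p.2) :
    Continuous fun p : ℝ × ℝ => deriv (fun s => Φ s p.2) p.1 := by
  simp only [(slice_hasDerivAt hΦ _ _).deriv]
  exact (hΦ.continuous_fderiv (by simp)).clm_apply continuous_const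

lemma slice_hasDerivAt' (hΦ : ContDiff ℝ (⊤ : ℕ∞) fun p : ℝ × ℝ => Φ p.1 p.2) (s t : ℝ) :
    HasDerivAt (fun t => Φ s t) (fderiv ℝ (fun p : ℝ × ℝ => Φ p.1 p.2) (s, t) (0, 1)) t := by
  have hd : DifferentiableAt ℝ (fun p : ℝ × ℝ => Φ p.1 p.2) (s, t) :=
    (hΦ.differentiable (by simp)) _
  exact hd.hasFDerivAt.comp_hasDerivAt t ((hasDerivAt_const t s).prodMk (hasDerivAt_id t))

lemma slice_deriv_continuous' (hΦ : ContDiff ℝ (⊤ : ℕ∞) fun p : ℝ × ℝ => Φ p.1 p.2) :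
    Continuous fun p : ℝ × ℝ => deriv (Φ p.1) p.2 := by
  have : (fun p : ℝ × ℝ => deriv (Φ p.1) p.2) =
      fun p => fderiv ℝ (fun p : ℝ × ℝ => Φ p.1 p.2) p (0, 1) :=
    funext fun p => (slice_hasDerivAt' hΦ p.1 p.2).deriv
  rw [this]
  exact (hΦ.continuous_fderiv (by simp)).clm_apply continuous_const

lemma slice_SP (hΦ : ContDiff ℝ (⊤ : ℕ∞) fun p : ℝ × ℝ => Φ p.1 p.2)
    (hper : ∀ s, Function.Periodic (Φ s) (2 * π)) (s : ℝ) : SP (Φ s) :=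
  ⟨hΦ.comp (contDiff_const.prodMk contDiff_id), hper s⟩

/-- Differentiation of an angular coefficient under the integral sign. -/
lemma coeff_hasDerivAt (hΦ : ContDiff ℝ (⊤ : ℕ∞) fun p : ℝ × ℝ => Φ p.1 p.2)
    {g : ℝ → ℂ} (hg : Continuous g) (s : ℝ) :
    HasDerivAt (fun s => ip g (Φ s)) (ip g fun t => deriv (fun s => Φ s t) s) s := by
  unfold ip
  have hc := slice_deriv_continuous hΦ
  have hgc : Continuous fun t => (starRingEnd ℂ) (g t) := Complex.continuous_conj.comp hg
  have hK : Continuous fun p : ℝ × ℝ => (starRingEnd ℂ) (g p.2) * deriv (fun s => Φ s p.2) p.1 :=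
    (hgc.comp continuous_snd).mul hc
  have hΦs : ∀ s, Continuous (Φ s) := fun s =>
    hΦ.continuous.comp (continuous_const.prodMk continuous_id)
  obtain ⟨C, hC⟩ := (isCompact_Icc (a := s - 1) (b := s + 1)).prod
    (isCompact_Icc (a := -π) (b := π)) |>.exists_bound_of_continuousOn hK.continuousOn
  refine (intervalIntegral.hasDerivAt_integral_of_dominated_loc_of_deriv_le
    (F := fun s t => (starRingEnd ℂ) (g t) * Φ s t)
    (F' := fun s t => (starRingEnd ℂ) (g t) * deriv (fun s => Φ s t) s)
    (bound := fun _ => C) (s := Set.Icc (s - 1) (s + 1))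
    (Icc_mem_nhds (by linarith) (by linarith)) ?_ ?_ ?_ ?_ ?_ ?_).2
  · exact Eventually.of_forall fun s => (hgc.mul (hΦs s)).aestronglyMeasurable
  · exact (hgc.mul (hΦs s)).intervalIntegrable _ _
  · exact (hK.comp (continuous_const.prodMk continuous_id)).aestronglyMeasurable
  · refine Eventually.of_forall fun t ht x hx => hC (x, t) ⟨hx, ?_⟩
    rw [Set.uIoc_of_le (by linarith [pi_pos])] at ht
    exact Set.Ioc_subset_Icc_self ht
  · exact intervalIntegrable_const
  · refine Eventually.of_forall fun t ht x hx => ?_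
    rw [(slice_hasDerivAt hΦ x t).deriv]
    exact (slice_hasDerivAt hΦ x t).const_mul _

lemma coeff_deriv_continuous (hΦ : ContDiff ℝ (⊤ : ℕ∞) fun p : ℝ × ℝ => Φ p.1 p.2)
    {g : ℝ → ℂ} (hg : Continuous g) :
    Continuous fun s => ip g fun t => deriv (fun s => Φ s t) s := by
  unfold ip
  exact intervalIntegral.continuous_parametric_intervalIntegral_of_continuous'
    (f := fun s t => (starRingEnd ℂ) (g t) * deriv (fun s => Φ s t) s)
    (((Complex.continuous_conj.comp hg).comp continuous_snd).mul (slice_deriv_continuous hΦ)) _ _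

/-- The form in logarithmic polar coordinates is nonnegative when every negative angular mode
satisfies enough vanishing conditions. -/
lemma cyl_nonneg {a b : ℝ} {m : ℕ} {e : Fin m → ℝ} {g : Fin m → ℝ → ℂ} (h : MFam a b e g)
    (hgap : ∀ v, SP v → (∀ i, ip (g i) v = 0) → 0 ≤ Qf a b v (deriv v))
    (hΦ : ContDiff ℝ (⊤ : ℕ∞) fun p : ℝ × ℝ => Φ p.1 p.2)
    (hper : ∀ s, Function.Periodic (Φ s) (2 * π)) {ε S : ℝ} (hε : 0 < ε) (hS0 : 0 ≤ S)
    (M : Fin m → ℕ) (hM : ∀ k, a - e k ≤ ε * exp (2 * (M k * (π / √(a - e k)))))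
    (hS : ∀ k, M k * (π / √(a - e k)) ≤ S)
    (hz : ∀ k, ∀ j ≤ M k, ip (g k) (Φ (j * (π / √(a - e k)))) = 0) :
    0 ≤ ∫ s in (0:ℝ)..S, ∫ t in (-π)..π,
      (‖deriv (fun s => Φ s t) s‖ ^ 2 + ‖deriv (Φ s) t‖ ^ 2
        - (a + b * Real.cos t) * ‖Φ s t‖ ^ 2 - (-ε) * exp (2 * s) * ‖Φ s t‖ ^ 2) := by
  have hκ : ∀ k, 0 < a - e k := fun k => sub_pos.2 (h.lt k)
  have hsp := slice_SP hΦ hper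
  have c1 := slice_deriv_continuous hΦ
  have c2 := slice_deriv_continuous' hΦ
  have c3 : Continuous fun p : ℝ × ℝ => Φ p.1 p.2 := hΦ.continuous
  have c4 : ∀ s, Continuous fun t => deriv (fun s => Φ s t) s := fun s =>
    c1.comp (continuous_const.prodMk continuous_id)
  set R : Fin m → ℝ → ℝ := fun k s => ‖ip (g k) fun t => deriv (fun s => Φ s t) s‖ ^ 2
    - (√(a - e k)) ^ 2 * ‖ip (g k) (Φ s)‖ ^ 2 + ε * exp (2 * s) * ‖ip (g k) (Φ s)‖ ^ 2 with hR
  have hu : ∀ k s, HasDerivAt (fun s => ip (g k) (Φ s))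
      (ip (g k) fun t => deriv (fun s => Φ s t) s) s := fun k s => coeff_hasDerivAt hΦ (h.cont k) s
  have huc : ∀ k, Continuous fun s => ip (g k) (Φ s) := fun k =>
    continuous_iff_continuousAt.2 fun s => (hu k s).continuousAt
  have huc' : ∀ k, Continuous fun s => ip (g k) fun t => deriv (fun s => Φ s t) s :=
    fun k => coeff_deriv_continuous hΦ (h.cont k)
  have hRc : ∀ k, Continuous (R k) := by
    intro k
    have := huc k
    have := huc' k
    fun_prop
  have hR0 : ∀ k, 0 ≤ ∫ s in (0:ℝ)..S, R k s := by
    intro k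
    have hs : 0 < √(a - e k) := Real.sqrt_pos.2 (hκ k)
    refine radial_nonneg (hu k) (huc' k) (ℓ := π / √(a - e k)) (by positivity) hs ?_ hε (M k)
      (hz k) ?_ (hS k)
    · rw [mul_div_cancel₀ _ hs.ne']
    · rw [Real.sq_sqrt (hκ k).le]; exact hM k
  have hle : ∀ s, ∑ k, R k s ≤ ∫ t in (-π)..π,
      (‖deriv (fun s => Φ s t) s‖ ^ 2 + ‖deriv (Φ s) t‖ ^ 2
        - (a + b * Real.cos t) * ‖Φ s t‖ ^ 2 - (-ε) * exp (2 * s) * ‖Φ s t‖ ^ 2) := by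
    intro s
    have b1 := h.bessel (c4 s)
    have b2 := h.bessel (hsp s).continuous
    have b3 := h.Qf_ge hgap (hsp s)
    have c5 := c4 s
    have c6 := (hsp s).continuous
    have c7 := (hsp s).deriv.continuous
    have e1 : ∫ t in (-π)..π,
      (‖deriv (fun s => Φ s t) s‖ ^ 2 + ‖deriv (Φ s) t‖ ^ 2
        - (a + b * Real.cos t) * ‖Φ s t‖ ^ 2 - (-ε) * exp (2 * s) * ‖Φ s t‖ ^ 2) =
        (∫ t in (-π)..π, ‖deriv (fun s => Φ s t) s‖ ^ 2) + Qf a b (Φ s) (deriv (Φ s)) +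
        ε * exp (2 * s) * ∫ t in (-π)..π, ‖Φ s t‖ ^ 2 := by
      unfold Qf
      rw [← intervalIntegral.integral_const_mul, ← intervalIntegral.integral_add,
        ← intervalIntegral.integral_add]
      · congr 1; ext t; ring
      all_goals exact Continuous.intervalIntegrable (by fun_prop) _ _
    have e2 : ∑ k, R k s = ∑ k, ‖ip (g k) fun t => deriv (fun s => Φ s t) s‖ ^ 2 +
        ∑ k, (e k - a) * ‖ip (g k) (Φ s)‖ ^ 2 + ε * exp (2 * s) * ∑ k, ‖ip (g k) (Φ s)‖ ^ 2 := by
      rw [Finset.mul_sum, ← Finset.sum_add_distrib, ← Finset.sum_add_distrib]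
      refine Finset.sum_congr rfl fun k _ => ?_
      simp only [hR]
      rw [Real.sq_sqrt (hκ k).le]; ring
    rw [e1, e2]
    have : ε * exp (2 * s) * ∑ k, ‖ip (g k) (Φ s)‖ ^ 2 ≤
        ε * exp (2 * s) * ∫ t in (-π)..π, ‖Φ s t‖ ^ 2 :=
      mul_le_mul_of_nonneg_left b2 (by positivity)
    linarith
  calc (0:ℝ) ≤ ∑ k, ∫ s in (0:ℝ)..S, R k s := Finset.sum_nonneg fun k _ => hR0 k
    _ = ∫ s in (0:ℝ)..S, ∑ k, R k s := by
      rw [intervalIntegral.integral_finsetSum]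
      exact fun k _ => (hRc k).intervalIntegrable _ _
    _ ≤ _ := by
      refine intervalIntegral.integral_mono_on hS0 ?_ ?_ fun s _ => hle s
      · exact (continuous_finsetSum _ fun k _ => hRc k).intervalIntegrable _ _
      · refine Continuous.intervalIntegrable ?_ _ _
        apply intervalIntegral.continuous_parametric_intervalIntegral_of_continuous'
        have c8 : Continuous fun p : ℝ × ℝ => Real.cos p.2 := by fun_prop
        have c9 : Continuous fun p : ℝ × ℝ => exp (2 * p.1) := by fun_prop
        exact (((c1.norm.pow 2).add (c2.norm.pow 2)).sub ((continuous_const.add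
          (continuous_const.mul c8)).mul (c3.norm.pow 2))).sub
          ((continuous_const.mul c9).mul (c3.norm.pow 2))

end Separation

/-! ### Upper bound on the negativity index -/

lemma polPt_periodic (r : ℝ) : Function.Periodic (polPt r) (2 * π) := by
  intro t
  simp [polPt]

lemma Adm.slice_contDiff {ψ} (h : Adm ψ) :
    ContDiff ℝ (⊤ : ℕ∞) fun p : ℝ × ℝ => ψ (polPt (exp p.1) p.2) :=
  h.1.comp (contDiff_polPt.comp ((Real.contDiff_exp.comp contDiff_fst).prodMk contDiff_snd))

lemma Adm.slice_SP {ψ} (h : Adm ψ) (s : ℝ) : SP fun t => ψ (polPt (exp s) t) :=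
  _root_.slice_SP (Φ := fun s t => ψ (polPt (exp s) t)) h.slice_contDiff
    (fun s t => by simp only [polPt_periodic (exp s) t]) s

/-- Upper bound on the negativity index by the number of vanishing conditions. -/
lemma negIndex_le {a b : ℝ} {m : ℕ} {e : Fin m → ℝ} {g : Fin m → ℝ → ℂ} (h : MFam a b e g)
    (hgap : ∀ v, SP v → (∀ i, ip (g i) v = 0) → 0 ≤ Qf a b v (deriv v))
    {ε : ℝ} (hε : 0 < ε)
    (M : Fin m → ℕ) (hM : ∀ k, a - e k ≤ ε * exp (2 * (M k * (π / √(a - e k))))) :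
    negIndexOn Adm (qform a b (-ε)) ≤ ((∑ k, M k : ℕ) : ℕ∞) := by
  unfold negIndexOn
  refine iSup₂_le fun W hW => ?_
  obtain ⟨hW1, hW2⟩ := hW
  by_contra! hcon
  have hlt : ∑ k, M k < Module.finrank ℂ W := by exact_mod_cast hcon
  have hadm : ∀ ψ : W, Adm ψ := fun ψ => hW1 ψ.2
  -- The conditions at `j + 1 = 1, …, M k`; at the point `0`, on the unit circle, `ψ` vanishes anyway.
  let T : W →ₗ[ℂ] ((Σ k : Fin m, Fin (M k)) → ℂ) :=
    { toFun := fun ψ i => ip (g i.1)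
        (fun t => (ψ : E2 → ℂ) (polPt (exp (((i.2 : ℕ) + 1 : ℕ) * (π / √(a - e i.1)))) t))
      map_add' := fun ψ χ => by
        funext i
        exact ip_add (h.cont _) ((hadm ψ).slice_SP _).continuous ((hadm χ).slice_SP _).continuous
      map_smul' := fun c ψ => by
        funext i
        exact ip_smul _ _ _ }
  have : Module.Finite ℂ W := Module.finite_of_finrank_pos (by omega)
  have hker : T.ker ≠ ⊥ := LinearMap.ker_ne_bot_of_finrank_lt (by simpa using hlt)
  obtain ⟨ψ, hψ, hψ0⟩ := (Submodule.ne_bot_iff _).1 hker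
  have hA := hadm ψ
  have hneg : qform a b (-ε) (ψ : E2 → ℂ) < 0 := hW2 ψ ψ.2 (by simpa using hψ0)
  obtain ⟨S0, hS0⟩ := hA.exists_bound
  obtain ⟨S1, hS1⟩ : ∃ S1, ∀ k, M k * (π / √(a - e k)) ≤ S1 := by
    obtain ⟨S1, hS1⟩ := (Set.finite_range fun k => M k * (π / √(a - e k))).bddAbove
    exact ⟨S1, fun k => hS1 ⟨k, rfl⟩⟩
  obtain ⟨hS2, hS3⟩ := hS0 (max S0 S1) (le_max_left _ _)
  rw [qform_polar hA hS2 hS3] at hneg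
  refine absurd hneg (not_lt.2 ?_)
  refine cyl_nonneg (Φ := fun s t => (ψ : E2 → ℂ) (polPt (exp s) t)) h hgap hA.slice_contDiff
    (fun s => (hA.slice_SP s).2) hε hS2 M hM (fun k => (hS1 k).trans (le_max_right _ _)) ?_
  intro k j hj
  rcases j with _ | j
  · have : (fun t => (ψ : E2 → ℂ) (polPt (exp ((0:ℕ) * (π / √(a - e k)))) t)) = fun _ => 0 := by
      funext t
      apply image_eq_zero_of_notMem_tsupport
      apply hA.zero_of_norm_le
      simp [norm_polPt]
    rw [this]
    simp [ip]
  · exact congrFun hψ (⟨k, ⟨j, hj⟩⟩ : Σ k : Fin m, Fin (M k))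

/-! ### Bump functions with negative radial form -/

/-- A smooth approximation of `x ↦ max x 0` vanishing on `x ≤ δ`, for `δ > 0`. -/
def softPos (δ x : ℝ) : ℝ := ∫ t in (0:ℝ)..x, Real.smoothTransition ((t - δ) / δ)

lemma softPos_integrand_contDiff (δ : ℝ) :
    ContDiff ℝ (⊤ : ℕ∞) fun t : ℝ => Real.smoothTransition ((t - δ) / δ) :=
  Real.smoothTransition.contDiff.comp ((contDiff_id.sub contDiff_const).div_const δ)

lemma softPos_hasDerivAt (δ x : ℝ) :
    HasDerivAt (softPos δ) (Real.smoothTransition ((x - δ) / δ)) x :=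
  intervalIntegral.integral_hasDerivAt_right
    ((softPos_integrand_contDiff δ).continuous.intervalIntegrable _ _)
    ((softPos_integrand_contDiff δ).continuous.stronglyMeasurableAtFilter _ _)
    (softPos_integrand_contDiff δ).continuous.continuousAt

lemma softPos_contDiff (δ : ℝ) : ContDiff ℝ (⊤ : ℕ∞) (softPos δ) := by
  rw [contDiff_infty_iff_deriv]
  refine ⟨fun x => (softPos_hasDerivAt δ x).differentiableAt, ?_⟩
  rw [show deriv (softPos δ) = _ from funext fun x => (softPos_hasDerivAt δ x).deriv]
  exact softPos_integrand_contDiff δ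

lemma softPos_eq_zero {δ x : ℝ} (hδ : 0 < δ) (hx : x ≤ δ) : softPos δ x = 0 := by
  unfold softPos
  rw [intervalIntegral.integral_zero_ae]
  refine Eventually.of_forall fun t ht => ?_
  apply Real.smoothTransition.zero_of_nonpos
  have : t ≤ δ := by
    rcases Set.mem_uIoc.1 ht with h | h <;> linarith [h.1, h.2]
  exact div_nonpos_of_nonpos_of_nonneg (by linarith) hδ.le

lemma softPos_ge {δ x : ℝ} (hδ : 0 < δ) (hx : 2 * δ ≤ x) : x - 2 * δ ≤ softPos δ x := by
  unfold softPos
  have hi := fun u v => (softPos_integrand_contDiff δ).continuous.intervalIntegrable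
    (μ := volume) u v
  rw [← intervalIntegral.integral_add_adjacent_intervals (hi 0 (2 * δ)) (hi (2 * δ) x)]
  have h1 : 0 ≤ ∫ t in (0:ℝ)..(2 * δ), Real.smoothTransition ((t - δ) / δ) :=
    intervalIntegral.integral_nonneg (by linarith) fun t _ => Real.smoothTransition.nonneg _
  have h2 : ∫ t in (2 * δ)..x, Real.smoothTransition ((t - δ) / δ) = ∫ t in (2 * δ)..x, (1:ℝ) := by
    apply intervalIntegral.integral_congr
    intro t ht
    rw [Set.uIcc_of_le hx] at ht
    apply Real.smoothTransition.one_of_one_le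
    rw [le_div_iff₀ hδ]; linarith [ht.1]
  rw [h2, intervalIntegral.integral_const]
  simp only [smul_eq_mul, mul_one]
  linarith

lemma softPos_sq_ge {δ x : ℝ} (hδ : 0 < δ) (hx0 : 0 ≤ x) (hx1 : x ≤ 1) :
    x ^ 2 - 4 * δ ≤ softPos δ x ^ 2 := by
  by_cases hx : 2 * δ ≤ x
  · have h := softPos_ge hδ hx
    nlinarith
  · push Not at hx
    nlinarith [sq_nonneg (softPos δ x)]

lemma integral_sin_sq_scaled {l : ℝ} (hl : 0 < l) :
    ∫ s in (0:ℝ)..l, Real.sin (π / l * s) ^ 2 = l / 2 := by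
  have h0 : π / l ≠ 0 := (div_pos pi_pos hl).ne'
  rw [intervalIntegral.integral_comp_mul_left (fun x => Real.sin x ^ 2) h0, integral_sin_sq]
  rw [div_mul_cancel₀ _ hl.ne']
  simp
  field_simp

/-- A test function on `(0, l)` for which the one-dimensional form is negative, available as soon
as `l` exceeds `π / κ`. -/
lemma exists_bump {κ l : ℝ} (hκ : 0 < κ) (hl : 0 < l) (hκl : π < κ * l) :
    ∃ φ : ℝ → ℝ, ContDiff ℝ (⊤ : ℕ∞) φ ∧ (∃ η > 0, ∀ s, φ s ≠ 0 → η ≤ s ∧ s ≤ l - η) ∧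
      ∃ τ > 0, ∫ s in (0:ℝ)..l, (deriv φ s ^ 2 - κ ^ 2 * φ s ^ 2 + τ * φ s ^ 2) < 0 := by
  -- The ground state `sin (π s / l)` has negative form; `softPos δ` cuts it off near the endpoints
  -- without increasing its derivative, and costs `O(δ)` in the `L²` norm. The gap `κ² - (π / l)²`
  -- pays half for the term `τ φ²` and half for this loss.
  set lam := π / l with hlam
  have hlam0 : 0 < lam := div_pos pi_pos hl
  have hll : lam * l = π := div_mul_cancel₀ _ hl.ne'
  have hlk : lam < κ := by rw [hlam, div_lt_iff₀ hl]; exact hκl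
  have hlk2 : lam ^ 2 < κ ^ 2 := by nlinarith
  set τ := (κ ^ 2 - lam ^ 2) / 2 with hτ
  have hτ0 : 0 < τ := by linarith
  set ν := (κ ^ 2 + lam ^ 2) / 2 with hν
  have hν0 : 0 < ν := by positivity
  have hνl : lam ^ 2 < ν := by linarith
  set δ := (ν - lam ^ 2) / (16 * ν) with hδ
  have hδ0 : 0 < δ := div_pos (by linarith) (by linarith)
  have hδν : δ * (16 * ν) = ν - lam ^ 2 := div_mul_cancel₀ _ (by positivity)
  classical
  set f : ℝ → ℝ := fun s => softPos δ (Real.sin (lam * s)) with hf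
  have hfc : ContDiff ℝ (⊤ : ℕ∞) f :=
    (softPos_contDiff δ).comp (Real.contDiff_sin.comp (contDiff_const.mul contDiff_id))
  set φ : ℝ → ℝ := fun s => if 0 < s ∧ s < l then f s else 0 with hφ
  have hφf : ∀ s, 0 ≤ s → s ≤ l → φ s = f s := by
    intro s h0 h1
    by_cases h : 0 < s ∧ s < l
    · simp [hφ, h]
    · have : s = 0 ∨ s = l := by
        by_contra! hc
        exact h ⟨lt_of_le_of_ne h0 (Ne.symm hc.1), lt_of_le_of_ne h1 hc.2⟩
      simp only [hφ, h, if_false, hf]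
      rw [softPos_eq_zero hδ0]
      rcases this with rfl | rfl
      · simp [hδ0.le]
      · rw [hll]; simp [hδ0.le]
  have hopen1 : IsOpen {s : ℝ | 0 < s ∧ s < l} := isOpen_Ioo
  have hopen2 : IsOpen {s : ℝ | Real.sin (lam * s) < δ} :=
    isOpen_lt (by fun_prop) continuous_const
  have hopen3 : IsOpen {s : ℝ | s < 0 ∨ l < s} := isOpen_Iio.union isOpen_Ioi
  have hφc : ContDiff ℝ (⊤ : ℕ∞) φ := by
    rw [contDiff_iff_contDiffAt]
    intro s
    by_cases h : 0 < s ∧ s < l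
    · refine hfc.contDiffAt.congr_of_eventuallyEq ?_
      filter_upwards [hopen1.mem_nhds h] with x hx
      have hx' : 0 < x ∧ x < l := hx
      simp [hφ, hx']
    · have hz : φ =ᶠ[𝓝 s] fun _ => 0 := by
        by_cases h3 : s < 0 ∨ l < s
        · filter_upwards [hopen3.mem_nhds h3] with x hx
          have hx' : ¬ (0 < x ∧ x < l) := by
            rintro ⟨h1, h2⟩
            rcases hx with hx | hx <;> linarith
          simp [hφ, hx']
        · push Not at h3
          have : s = 0 ∨ s = l := by
            by_contra! hc
            exact h ⟨lt_of_le_of_ne h3.1 (Ne.symm hc.1), lt_of_le_of_ne h3.2 hc.2⟩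
          have h2 : Real.sin (lam * s) < δ := by
            rcases this with rfl | rfl
            · simpa using hδ0
            · rw [hll]; simpa using hδ0
          filter_upwards [hopen2.mem_nhds h2] with x hx
          have hx' : Real.sin (lam * x) ≤ δ := le_of_lt hx
          simp [hφ, hf, softPos_eq_zero hδ0 hx']
      exact contDiffAt_const.congr_of_eventuallyEq hz
  refine ⟨φ, hφc, ⟨δ / lam, div_pos hδ0 hlam0, ?_⟩, τ, hτ0, ?_⟩
  · intro s hs
    have hs0 : 0 < s ∧ s < l := by
      by_contra h
      simp [hφ, h] at hs
    have hsin : δ < Real.sin (lam * s) := by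
      by_contra! h
      simp [hφ, hf, softPos_eq_zero hδ0 h] at hs
    have h1 : Real.sin (lam * s) ≤ lam * s := Real.sin_le (by nlinarith)
    have h2 : Real.sin (lam * s) ≤ lam * (l - s) := by
      rw [← Real.sin_pi_sub, ← hll, ← mul_sub]
      exact Real.sin_le (by nlinarith)
    constructor
    · rw [div_le_iff₀ hlam0]; nlinarith
    · have : δ / lam ≤ l - s := by rw [div_le_iff₀ hlam0]; nlinarith
      linarith
  · have hφ' : Continuous (deriv φ) := (contDiff_infty_iff_deriv.1 hφc).2.continuous
    have hφ0 : Continuous φ := hφc.continuous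
    have hd : ∀ s ∈ Set.Ioo 0 l, deriv φ s ^ 2 ≤ lam ^ 2 * (1 - Real.sin (lam * s) ^ 2) := by
      intro s hs
      have he : φ =ᶠ[𝓝 s] f := by
        filter_upwards [hopen1.mem_nhds hs] with x hx
        exact hφf x (le_of_lt hx.1) (le_of_lt hx.2)
      have h1 : HasDerivAt f (Real.smoothTransition ((Real.sin (lam * s) - δ) / δ) *
          (Real.cos (lam * s) * (lam * 1))) s :=
        (softPos_hasDerivAt δ _).comp s
          ((Real.hasDerivAt_sin (lam * s)).comp s ((hasDerivAt_id s).const_mul lam))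
      rw [he.deriv_eq, h1.deriv, ← Real.cos_sq']
      have a1 := Real.smoothTransition.nonneg ((Real.sin (lam * s) - δ) / δ)
      have a2 := Real.smoothTransition.le_one ((Real.sin (lam * s) - δ) / δ)
      have a3 : Real.smoothTransition ((Real.sin (lam * s) - δ) / δ) ^ 2 ≤ 1 := by nlinarith
      calc _ = Real.smoothTransition ((Real.sin (lam * s) - δ) / δ) ^ 2 *
            (lam ^ 2 * Real.cos (lam * s) ^ 2) := by ring
        _ ≤ 1 * (lam ^ 2 * Real.cos (lam * s) ^ 2) :=
          mul_le_mul_of_nonneg_right a3 (by positivity)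
        _ = _ := one_mul _
    have hle : ∀ s ∈ Set.Ioo 0 l, deriv φ s ^ 2 - κ ^ 2 * φ s ^ 2 + τ * φ s ^ 2 ≤
        (lam ^ 2 + 4 * δ * ν) - (lam ^ 2 + ν) * Real.sin (lam * s) ^ 2 := by
      intro s hs
      have h1 := hd s hs
      have h0 : 0 ≤ Real.sin (lam * s) :=
        Real.sin_nonneg_of_nonneg_of_le_pi (by nlinarith [hs.1]) (by nlinarith [hs.2])
      have h2 := softPos_sq_ge hδ0 h0 (Real.sin_le_one _)
      have h3 : φ s = softPos δ (Real.sin (lam * s)) := hφf s hs.1.le hs.2.le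
      rw [← h3] at h2
      have h4 : κ ^ 2 = ν + τ := by rw [hν, hτ]; ring
      have h5 := mul_le_mul_of_nonneg_left h2 hν0.le
      rw [h4]
      linarith
    have hInt : ∫ s in (0:ℝ)..l, (deriv φ s ^ 2 - κ ^ 2 * φ s ^ 2 + τ * φ s ^ 2) ≤
        ∫ s in (0:ℝ)..l, ((lam ^ 2 + 4 * δ * ν) - (lam ^ 2 + ν) * Real.sin (lam * s) ^ 2) :=
      intervalIntegral.integral_mono_on_of_le_Ioo hl.le
        (Continuous.intervalIntegrable (by fun_prop) _ _)
        (Continuous.intervalIntegrable (by fun_prop) _ _) hle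
    refine hInt.trans_lt ?_
    rw [intervalIntegral.integral_sub (Continuous.intervalIntegrable (by fun_prop) _ _)
        (Continuous.intervalIntegrable (by fun_prop) _ _),
      intervalIntegral.integral_const_mul, integral_sin_sq_scaled hl,
      intervalIntegral.integral_const]
    simp only [sub_zero, smul_eq_mul]
    nlinarith

/-! ### Lifting functions from polar coordinates to the plane -/

/-- The standard identification of the Euclidean plane with `ℂ`. -/
def toC : E2 ≃ₗᵢ[ℝ] ℂ := Complex.orthonormalBasisOneI.repr.symm

lemma toC_polPt (r t : ℝ) : toC (polPt r t) = r * (Complex.cos t + Complex.sin t * Complex.I) := by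
  unfold toC
  rw [LinearIsometryEquiv.symm_apply_eq]
  ext i
  fin_cases i <;> simp [polPt, Complex.cos_ofReal_re, Complex.sin_ofReal_re]

/-- The function on the plane given in logarithmic polar coordinates by `Φ`. -/
def polLift (Φ : ℝ → ℝ → ℂ) (x : E2) : ℂ := Φ (Real.log ‖x‖) (Complex.arg (toC x))

lemma periodic_of_angle_eq {f : ℝ → ℂ} (hf : Function.Periodic f (2 * π)) {x y : ℝ}
    (h : (x : Real.Angle) = y) : f x = f y := by
  obtain ⟨k, hk⟩ := Real.Angle.angle_eq_iff_two_pi_dvd_sub.1 h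
  have : x = y + k * (2 * π) := by linarith
  rw [this]
  exact hf.int_mul k y

lemma polLift_polPt {Φ : ℝ → ℝ → ℂ} (hper : ∀ s, Function.Periodic (Φ s) (2 * π)) (s t : ℝ) :
    polLift Φ (polPt (exp s) t) = Φ s t := by
  unfold polLift
  rw [norm_polPt, abs_of_pos (exp_pos s), Real.log_exp]
  apply periodic_of_angle_eq (hper s)
  rw [toC_polPt]
  have := Complex.arg_mul_cos_add_sin_mul_I_coe_angle (exp_pos s) (t : Real.Angle)
  simpa using this

lemma contDiffAt_arg_real {z : ℂ} (hz : z ∈ Complex.slitPlane) :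
    ContDiffAt ℝ (⊤ : ℕ∞) Complex.arg z := by
  have h1 : ContDiffAt ℝ (⊤ : ℕ∞) Complex.log z := (Complex.contDiffAt_log hz).restrict_scalars ℝ
  have h2 : Complex.arg = fun z => Complex.imCLM (Complex.log z) := by
    funext z; simp [Complex.log_im]
  rw [h2]
  exact Complex.imCLM.contDiff.contDiffAt.comp z h1

/-- A smooth function of `(s, t)`, periodic in `t` and supported in `η ≤ s ≤ S`, descends to a
test function on the exterior domain. -/
lemma polLift_adm {Φ : ℝ → ℝ → ℂ} (hΦ : ContDiff ℝ (⊤ : ℕ∞) fun p : ℝ × ℝ => Φ p.1 p.2)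
    (hper : ∀ s, Function.Periodic (Φ s) (2 * π)) {η S : ℝ} (hη : 0 < η)
    (h0 : ∀ s t, Φ s t ≠ 0 → η ≤ s ∧ s ≤ S) :
    Adm (polLift Φ) ∧ ∀ x ∈ tsupport (polLift Φ), ‖x‖ ≤ exp S := by
  have hsub : Function.support (polLift Φ) ⊆ {x : E2 | exp η ≤ ‖x‖ ∧ ‖x‖ ≤ exp S} := by
    intro x hx
    have h1 := h0 _ _ hx
    have hx0 : 0 < ‖x‖ := by
      by_contra! hc
      have : ‖x‖ = 0 := le_antisymm hc (norm_nonneg x)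
      rw [this, Real.log_zero] at h1
      linarith [h1.1]
    exact ⟨(Real.le_log_iff_exp_le hx0).1 h1.1, (Real.log_le_iff_le_exp hx0).1 h1.2⟩
  have hclosed : IsClosed {x : E2 | exp η ≤ ‖x‖ ∧ ‖x‖ ≤ exp S} :=
    (isClosed_le continuous_const continuous_norm).inter
      (isClosed_le continuous_norm continuous_const)
  have hts : tsupport (polLift Φ) ⊆ {x : E2 | exp η ≤ ‖x‖ ∧ ‖x‖ ≤ exp S} :=
    closure_minimal hsub hclosed
  have hη1 : 1 < exp η := Real.one_lt_exp_iff.2 hη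
  refine ⟨⟨?_, ?_, fun x hx => hη1.trans_le (hts hx).1⟩, fun x hx => (hts hx).2⟩
  · rw [contDiff_iff_contDiffAt]
    intro x
    by_cases hx : x = 0
    · have hn : polLift Φ =ᶠ[𝓝 x] fun _ => 0 := by
        have : (tsupport (polLift Φ))ᶜ ∈ 𝓝 x := by
          refine (isClosed_tsupport _).isOpen_compl.mem_nhds fun hm => ?_
          have := (hts hm).1
          rw [hx, norm_zero] at this
          linarith
        filter_upwards [this] with y hy
        exact image_eq_zero_of_notMem_tsupport hy
      exact contDiffAt_const.congr_of_eventuallyEq hn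
    · have hlog : ContDiffAt ℝ (⊤ : ℕ∞) (fun y : E2 => Real.log ‖y‖) x :=
        (Real.contDiffAt_log.2 (norm_ne_zero_iff.2 hx)).comp x (contDiffAt_norm ℝ hx)
      have htoC : ContDiffAt ℝ (⊤ : ℕ∞) toC x := toC.contDiff.contDiffAt
      have hz : toC x ≠ 0 := by simpa using hx
      rcases Complex.mem_slitPlane_or_neg_mem_slitPlane hz with h | h
      · exact hΦ.contDiffAt.comp x (hlog.prodMk ((contDiffAt_arg_real h).comp x htoC))
      · -- near the cut, use the branch `arg (-z) + π` of the angle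
        have hsm : ContDiffAt ℝ (⊤ : ℕ∞)
            (fun y => Φ (Real.log ‖y‖) (Complex.arg (-toC y) + π)) x := by
          have harg : ContDiffAt ℝ (⊤ : ℕ∞) (fun y => Complex.arg (-toC y)) x :=
            ContDiffAt.comp x (g := Complex.arg) (f := fun y => -toC y)
              (contDiffAt_arg_real h) htoC.neg
          exact hΦ.contDiffAt.comp x (hlog.prodMk (harg.add contDiffAt_const))
        refine hsm.congr_of_eventuallyEq ?_
        filter_upwards [isOpen_ne.mem_nhds hx] with y hy
        apply periodic_of_angle_eq (hper _)
        have hy' : toC y ≠ 0 := by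
          rw [Ne, LinearIsometryEquiv.map_eq_zero_iff]; exact hy
        rw [Real.Angle.coe_add, Complex.arg_neg_coe_angle hy', add_assoc]
        simp
  · refine HasCompactSupport.intro (isCompact_closedBall (0 : E2) (exp S)) fun x hx => ?_
    by_contra hne
    exact hx (by simpa using (hsub hne).2)

/-! ### Lower bound on the negativity index -/

lemma norm_sq_sum_of_disjoint {ι : Type*} [Fintype ι] {x : ι → ℂ}
    (hx : ∀ i j, i ≠ j → x i * x j = 0) : ‖∑ i, x i‖ ^ 2 = ∑ i, ‖x i‖ ^ 2 := by
  classical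
  by_cases h : ∃ i, x i ≠ 0
  · obtain ⟨i, hi⟩ := h
    have h0 : ∀ j, j ≠ i → x j = 0 := fun j hj =>
      (mul_eq_zero.1 (hx i j hj.symm)).resolve_left hi
    rw [Finset.sum_eq_single i (fun j _ hj => h0 j hj) (by simp),
      Finset.sum_eq_single i (fun j _ hj => by simp [h0 j hj]) (by simp)]
  · push Not at h
    simp [h]

section Lower

variable {a b : ℝ} {m : ℕ} {e : Fin m → ℝ} {g : Fin m → ℝ → ℂ}

lemma MFam.norm_comb (h : MFam a b e g) (c : Fin m → ℂ) :
    ∫ t in (-π)..π, ‖∑ j, c j * g j t‖ ^ 2 = ∑ k, ‖c k‖ ^ 2 := by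
  have h1 := ip_self fun t => ∑ j, c j * g j t
  rw [ip_comb_left h.cont _ (h.comb_sp c).continuous] at h1
  simp only [h.ip_comb, conj_mul_self] at h1
  exact_mod_cast h1.symm

/-- Superposition of radial functions `f k j` in the angular modes `g k`. -/
def modeSum (g : Fin m → ℝ → ℂ) {M : Fin m → ℕ} (f : ∀ k, Fin (M k) → ℝ → ℝ)
    (c : (Σ k : Fin m, Fin (M k)) → ℂ) (s t : ℝ) : ℂ :=
  ∑ k, (∑ j, c ⟨k, j⟩ * (f k j s : ℂ)) * g k t

variable {M : Fin m → ℕ} {f : ∀ k, Fin (M k) → ℝ → ℝ}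

lemma modeSum_contDiff (h : MFam a b e g) (hf : ∀ k j, ContDiff ℝ (⊤ : ℕ∞) (f k j))
    (c : (Σ k : Fin m, Fin (M k)) → ℂ) :
    ContDiff ℝ (⊤ : ℕ∞) fun p : ℝ × ℝ => modeSum g f c p.1 p.2 := by
  unfold modeSum
  refine ContDiff.sum fun k _ => ContDiff.mul (ContDiff.sum fun j _ => contDiff_const.mul ?_) ?_
  · exact Complex.ofRealCLM.contDiff.comp ((hf k j).comp contDiff_fst)
  · exact (h.sol k).sp.1.comp contDiff_snd

/-- The form evaluated on a superposition of radially disjoint modes is diagonal. -/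
lemma modeSum_form (h : MFam a b e g) (hf : ∀ k j, ContDiff ℝ (⊤ : ℕ∞) (f k j))
    (hd : ∀ k i j, i ≠ j → ∀ s, f k i s * f k j s = 0 ∧ deriv (f k i) s * deriv (f k j) s = 0)
    (c : (Σ k : Fin m, Fin (M k)) → ℂ) (ε S : ℝ) :
    ∫ s in (0:ℝ)..S, ∫ t in (-π)..π,
      (‖deriv (fun s => modeSum g f c s t) s‖ ^ 2 + ‖deriv (modeSum g f c s) t‖ ^ 2
        - (a + b * Real.cos t) * ‖modeSum g f c s t‖ ^ 2
        - (-ε) * exp (2 * s) * ‖modeSum g f c s t‖ ^ 2) =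
    ∑ k, ∑ j, ‖c ⟨k, j⟩‖ ^ 2 * ∫ s in (0:ℝ)..S,
      (deriv (f k j) s ^ 2 - (a - e k) * f k j s ^ 2 + ε * exp (2 * s) * f k j s ^ 2) := by
  have hfd : ∀ k j s, HasDerivAt (f k j) (deriv (f k j) s) s := fun k j s =>
    ((hf k j).differentiable (by simp) s).hasDerivAt
  have hfc : ∀ k j, Continuous (f k j) := fun k j => (hf k j).continuous
  have hfc' : ∀ k j, Continuous (deriv (f k j)) := fun k j =>
    (contDiff_infty_iff_deriv.1 (hf k j)).2.continuous
  have hder : ∀ s t, deriv (fun s => modeSum g f c s t) s =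
      ∑ k, (∑ j, c ⟨k, j⟩ * ((deriv (f k j) s : ℝ) : ℂ)) * g k t := by
    intro s t
    unfold modeSum
    exact (HasDerivAt.fun_sum fun k _ => (HasDerivAt.fun_sum fun j _ =>
      ((hfd k j s).ofReal_comp).const_mul (c ⟨k, j⟩)).mul_const (g k t)).deriv
  have hsq : ∀ k s, ‖∑ j, c ⟨k, j⟩ * (f k j s : ℂ)‖ ^ 2 = ∑ j, ‖c ⟨k, j⟩‖ ^ 2 * f k j s ^ 2 := by
    intro k s
    rw [norm_sq_sum_of_disjoint]
    · exact Finset.sum_congr rfl fun j _ => by rw [norm_mul, mul_pow, Complex.norm_real,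
        Real.norm_eq_abs, sq_abs]
    · intro i j hij
      have : ((f k i s : ℝ) : ℂ) * ((f k j s : ℝ) : ℂ) = 0 := by
        exact_mod_cast (hd k i j hij s).1
      linear_combination (c ⟨k, i⟩ * c ⟨k, j⟩) * this
  have hsq' : ∀ k s, ‖∑ j, c ⟨k, j⟩ * ((deriv (f k j) s : ℝ) : ℂ)‖ ^ 2 =
      ∑ j, ‖c ⟨k, j⟩‖ ^ 2 * deriv (f k j) s ^ 2 := by
    intro k s
    rw [norm_sq_sum_of_disjoint]
    · exact Finset.sum_congr rfl fun j _ => by rw [norm_mul, mul_pow, Complex.norm_real,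
        Real.norm_eq_abs, sq_abs]
    · intro i j hij
      have : ((deriv (f k i) s : ℝ) : ℂ) * ((deriv (f k j) s : ℝ) : ℂ) = 0 := by
        exact_mod_cast (hd k i j hij s).2
      linear_combination (c ⟨k, i⟩ * c ⟨k, j⟩) * this
  have hin : ∀ s, ∫ t in (-π)..π,
      (‖deriv (fun s => modeSum g f c s t) s‖ ^ 2 + ‖deriv (modeSum g f c s) t‖ ^ 2
        - (a + b * Real.cos t) * ‖modeSum g f c s t‖ ^ 2
        - (-ε) * exp (2 * s) * ‖modeSum g f c s t‖ ^ 2) =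
      ∑ k, ∑ j, ‖c ⟨k, j⟩‖ ^ 2 * (deriv (f k j) s ^ 2 - (a - e k) * f k j s ^ 2 +
        ε * exp (2 * s) * f k j s ^ 2) := by
    intro s
    have hS : SP (modeSum g f c s) := h.comb_sp _
    have n1 : ∫ t in (-π)..π, ‖modeSum g f c s t‖ ^ 2 = _ := h.norm_comb _
    have n2 : Qf a b (modeSum g f c s) (deriv (modeSum g f c s)) = _ := h.Qf_comb _
    have n3 := h.norm_comb fun k => ∑ j, c ⟨k, j⟩ * ((deriv (f k j) s : ℝ) : ℂ)
    simp only [← hder s] at n3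
    have c5 : Continuous fun t => deriv (fun s => modeSum g f c s t) s := by
      simp only [hder]
      exact (h.comb_sp _).continuous
    have c6 := hS.continuous
    have c7 := hS.deriv.continuous
    have e1 : ∫ t in (-π)..π,
      (‖deriv (fun s => modeSum g f c s t) s‖ ^ 2 + ‖deriv (modeSum g f c s) t‖ ^ 2
        - (a + b * Real.cos t) * ‖modeSum g f c s t‖ ^ 2
        - (-ε) * exp (2 * s) * ‖modeSum g f c s t‖ ^ 2) =
        (∫ t in (-π)..π, ‖deriv (fun s => modeSum g f c s t) s‖ ^ 2) +
        Qf a b (modeSum g f c s) (deriv (modeSum g f c s)) +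
        ε * exp (2 * s) * ∫ t in (-π)..π, ‖modeSum g f c s t‖ ^ 2 := by
      unfold Qf
      rw [← intervalIntegral.integral_const_mul, ← intervalIntegral.integral_add,
        ← intervalIntegral.integral_add]
      · congr 1; ext t; ring
      all_goals exact Continuous.intervalIntegrable (by fun_prop) _ _
    rw [e1, n1, n2, n3, Finset.mul_sum, ← Finset.sum_add_distrib, ← Finset.sum_add_distrib]
    refine Finset.sum_congr rfl fun k _ => ?_
    rw [hsq, hsq', Finset.mul_sum, Finset.mul_sum, ← Finset.sum_add_distrib,
      ← Finset.sum_add_distrib]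
    exact Finset.sum_congr rfl fun j _ => by ring
  simp only [hin]
  have hcont : ∀ k j, Continuous fun s => ‖c ⟨k, j⟩‖ ^ 2 * (deriv (f k j) s ^ 2 -
      (a - e k) * f k j s ^ 2 + ε * exp (2 * s) * f k j s ^ 2) := by
    intro k j
    have := hfc k j
    have := hfc' k j
    fun_prop
  rw [intervalIntegral.integral_finsetSum]
  · refine Finset.sum_congr rfl fun k _ => ?_
    rw [intervalIntegral.integral_finsetSum]
    · exact Finset.sum_congr rfl fun j _ => intervalIntegral.integral_const_mul _ _
    · exact fun j _ => (hcont k j).intervalIntegrable _ _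
  · exact fun k _ => (continuous_finsetSum _ fun j _ => hcont k j).intervalIntegrable _ _

/-- Lower bound on the negativity index by the number of radially disjoint negative modes. -/
lemma le_negIndex (h : MFam a b e g) (hf : ∀ k j, ContDiff ℝ (⊤ : ℕ∞) (f k j))
    (hd : ∀ k i j, i ≠ j → ∀ s, f k i s * f k j s = 0 ∧ deriv (f k i) s * deriv (f k j) s = 0)
    {ε η S₁ S : ℝ} (hη : 0 < η) (hS0 : 0 ≤ S) (hS : S₁ < S)
    (hs : ∀ k j s, f k j s ≠ 0 → η ≤ s ∧ s ≤ S₁)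
    (hneg : ∀ k j, ∫ s in (0:ℝ)..S,
      (deriv (f k j) s ^ 2 - (a - e k) * f k j s ^ 2 + ε * exp (2 * s) * f k j s ^ 2) < 0) :
    ((∑ k, M k : ℕ) : ℕ∞) ≤ negIndexOn Adm (qform a b (-ε)) := by
  have hper : ∀ c s, Function.Periodic (modeSum g f c s) (2 * π) := fun c s => (h.comb_sp _).2
  have hlift := fun c => polLift_adm (modeSum_contDiff h hf c) (hper c) (S := S₁) hη (by
    intro s t hne
    by_contra hcon
    apply hne
    unfold modeSum
    refine Finset.sum_eq_zero fun k _ => ?_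
    rw [Finset.sum_eq_zero, zero_mul]
    intro j _
    have : f k j s = 0 := by
      by_contra h0
      exact hcon (hs k j s h0)
    simp [this])
  have hq : ∀ c, c ≠ 0 → qform a b (-ε) (polLift (modeSum g f c)) < 0 := by
    intro c hc
    rw [qform_polar (hlift c).1 hS0 fun x hx hm => ?_]
    · have e1 : (fun s t => polLift (modeSum g f c) (polPt (exp s) t)) = modeSum g f c := by
        funext s t; exact polLift_polPt (hper c) s t
      have e2 := modeSum_form h hf hd c ε S
      rw [← e1] at e2
      refine e2.trans_lt ?_
      obtain ⟨⟨k0, j0⟩, h0⟩ := Function.ne_iff.1 hc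
      have hle : ∀ k j, ‖c ⟨k, j⟩‖ ^ 2 * (∫ s in (0:ℝ)..S, (deriv (f k j) s ^ 2 -
          (a - e k) * f k j s ^ 2 + ε * exp (2 * s) * f k j s ^ 2)) ≤ 0 := fun k j =>
        mul_nonpos_of_nonneg_of_nonpos (by positivity) (hneg k j).le
      refine Finset.sum_neg' (fun k _ => Finset.sum_nonpos fun j _ => hle k j)
        ⟨k0, Finset.mem_univ _, Finset.sum_neg' (fun j _ => hle k0 j) ⟨j0, Finset.mem_univ _, ?_⟩⟩
      have : 0 < ‖c ⟨k0, j0⟩‖ := norm_pos_iff.2 h0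
      exact mul_neg_of_pos_of_neg (by positivity) (hneg k0 j0)
    · have h1 := (hlift c).2 x hm
      have h2 := Real.exp_lt_exp.2 hS
      linarith
  let T : ((Σ k : Fin m, Fin (M k)) → ℂ) →ₗ[ℂ] (E2 → ℂ) :=
    { toFun := fun c => polLift (modeSum g f c)
      map_add' := fun c d => by
        funext x
        simp only [polLift, modeSum, Pi.add_apply, add_mul, Finset.sum_add_distrib]
      map_smul' := fun r c => by
        funext x
        simp only [polLift, modeSum, Pi.smul_apply, smul_eq_mul, RingHom.id_apply, mul_assoc,
          Finset.mul_sum, Finset.sum_mul] }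
  have hT0 : ∀ c, c ≠ 0 → T c ≠ 0 := by
    intro c hc h0
    have h1 : qform a b (-ε) (T c) < 0 := hq c hc
    rw [h0] at h1
    have h2 : qform a b (-ε) 0 = 0 := by simp [qform, fderiv_zero]
    linarith
  have hinj : Function.Injective T :=
    (injective_iff_map_eq_zero T).2 fun c hc => by_contra fun hne => hT0 c hne hc
  have hW : T.range ∈ {W : Submodule ℂ (E2 → ℂ) | (W : Set (E2 → ℂ)) ⊆ {ψ | Adm ψ} ∧
      ∀ ψ ∈ W, ψ ≠ 0 → qform a b (-ε) ψ < 0} := by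
    refine ⟨?_, ?_⟩
    · rintro _ ⟨c, rfl⟩
      exact (hlift c).1
    · rintro _ ⟨c, rfl⟩ hne
      exact hq c fun h0 => hne (by rw [h0, map_zero])
  have hrank : Module.finrank ℂ T.range = ∑ k, M k := by
    rw [LinearMap.finrank_range_of_inj hinj]
    simp
  rw [← hrank]
  unfold negIndexOn
  exact le_iSup₂ (f := fun (W : Submodule ℂ (E2 → ℂ)) (_ : W ∈ {W : Submodule ℂ (E2 → ℂ) |
    (W : Set (E2 → ℂ)) ⊆ {ψ | Adm ψ} ∧ ∀ ψ ∈ W, ψ ≠ 0 → qform a b (-ε) ψ < 0}) =>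
    (Module.finrank ℂ W : ℕ∞)) T.range hW

end Lower

/-! ### Two-sided counting estimates -/

lemma deriv_supp {φ : ℝ → ℝ} {u v : ℝ} (h : ∀ s, φ s ≠ 0 → u ≤ s ∧ s ≤ v) (s : ℝ)
    (hs : deriv φ s ≠ 0) : u ≤ s ∧ s ≤ v := by
  have h1 : tsupport φ ⊆ Set.Icc u v := closure_minimal (fun x hx => h x hx) isClosed_Icc
  exact h1 (support_deriv_subset hs)

section Count

variable {a b : ℝ} {m : ℕ} {e : Fin m → ℝ} {g : Fin m → ℝ → ℂ}

/-- Translates of one bump per mode give many negative directions. -/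
lemma exists_le_negIndex (h : MFam a b e g) (l : Fin m → ℝ) (hl0 : ∀ k, 0 < l k)
    (hl : ∀ k, π < √(a - e k) * l k) :
    ∃ τ : Fin m → ℝ, (∀ k, 0 < τ k) ∧ ∀ ε > 0, ∀ M : Fin m → ℕ,
      (∀ k, M k ≠ 0 → ε * exp (2 * (M k * l k)) ≤ τ k) →
      ((∑ k, M k : ℕ) : ℕ∞) ≤ negIndexOn Adm (qform a b (-ε)) := by
  have hκ : ∀ k, 0 < a - e k := fun k => sub_pos.2 (h.lt k)
  choose φ hφ hη hτ using fun k => exists_bump (Real.sqrt_pos.2 (hκ k)) (hl0 k) (hl k)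
  choose η hη0 hη using hη
  choose τ hτ0 hτ using hτ
  refine ⟨τ, hτ0, fun ε hε M hM => ?_⟩
  obtain ⟨η₀, hη₀, hη₀'⟩ : ∃ η₀, (∀ k, η₀ ≤ η k) ∧ 0 < η₀ := by
    have h1 : ∀ᶠ x in 𝓝[>] (0:ℝ), ∀ k, x ≤ η k := eventually_all.2 fun k =>
      mem_nhdsWithin_of_mem_nhds (Iic_mem_nhds (hη0 k))
    exact (h1.and self_mem_nhdsWithin).exists
  obtain ⟨S₁, hS₁⟩ : ∃ S1, ∀ k, M k * l k ≤ S1 := by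
    obtain ⟨S1, hS1⟩ := (Set.finite_range fun k => M k * l k).bddAbove
    exact ⟨S1, fun k => hS1 ⟨k, rfl⟩⟩
  have hderiv : ∀ k (c s : ℝ), deriv (fun s => φ k (s - c)) s = deriv (φ k) (s - c) :=
    fun k c s => deriv_comp_sub_const (f := φ k) c s
  have hdisj : ∀ k, ∀ i j : Fin (M k), i ≠ j → ∀ s,
      η k ≤ s - (i : ℕ) * l k ∧ s - (i : ℕ) * l k ≤ l k - η k →
      η k ≤ s - (j : ℕ) * l k ∧ s - (j : ℕ) * l k ≤ l k - η k → False := by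
    intro k i j hij s hi hj
    have hlk := hl0 k
    have hηk := hη0 k
    have hne : (i : ℕ) ≠ (j : ℕ) := fun hh => hij (Fin.ext hh)
    rcases lt_or_gt_of_ne hne with hlt | hlt
    · have : ((i : ℕ) : ℝ) + 1 ≤ (j : ℕ) := by exact_mod_cast hlt
      nlinarith [hi.2, hj.1]
    · have : ((j : ℕ) : ℝ) + 1 ≤ (i : ℕ) := by exact_mod_cast hlt
      nlinarith [hj.2, hi.1]
  have htop : ∀ k, ∀ j : Fin (M k), ∀ s, s - (j : ℕ) * l k ≤ l k - η k → s ≤ M k * l k := by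
    intro k j s hs
    have : ((j : ℕ) : ℝ) + 1 ≤ M k := by exact_mod_cast j.2
    nlinarith [hl0 k, hη0 k]
  refine le_negIndex (f := fun k (j : Fin (M k)) s => φ k (s - (j : ℕ) * l k)) h
    (fun k j => (hφ k).comp (contDiff_id.sub contDiff_const)) ?_ hη₀' (S₁ := S₁)
    (S := max S₁ 0 + 1) (by positivity) (by linarith [le_max_left S₁ 0]) ?_ ?_
  · intro k i j hij s
    simp only [hderiv]
    constructor
    · by_contra hne
      exact hdisj k i j hij s (hη k _ (left_ne_zero_of_mul hne)) (hη k _ (right_ne_zero_of_mul hne))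
    · by_contra hne
      exact hdisj k i j hij s (deriv_supp (hη k) _ (left_ne_zero_of_mul hne))
        (deriv_supp (hη k) _ (right_ne_zero_of_mul hne))
  · intro k j s hs
    have h1 := hη k _ hs
    have h2 : 0 ≤ ((j : ℕ) : ℝ) * l k := mul_nonneg (Nat.cast_nonneg _) (hl0 k).le
    exact ⟨by linarith [hη₀ k], (htop k j s h1.2).trans (hS₁ k)⟩
  · intro k j
    simp only [hderiv]
    set F : ℝ → ℝ := fun s => deriv (φ k) s ^ 2 - √(a - e k) ^ 2 * φ k s ^ 2 + τ k * φ k s ^ 2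
      with hF
    have c1 : Continuous (φ k) := (hφ k).continuous
    have c2 : Continuous (deriv (φ k)) := (contDiff_infty_iff_deriv.1 (hφ k)).2.continuous
    have hS0 : (0:ℝ) ≤ max S₁ 0 + 1 := by positivity
    have hlt : ∫ s in (0:ℝ)..(max S₁ 0 + 1), F (s - (j : ℕ) * l k) < 0 := by
      rw [intervalIntegral.integral_comp_sub_right]
      have hsupp : ∀ s, F s ≠ 0 → η k ≤ s ∧ s ≤ l k - η k := by
        intro s hs
        by_contra hc
        have z1 : φ k s = 0 := by_contra fun hne => hc (hη k s hne)
        have z2 : deriv (φ k) s = 0 := by_contra fun hne => hc (deriv_supp (hη k) s hne)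
        exact hs (by simp [hF, z1, z2])
      have hjl : 0 ≤ ((j : ℕ) : ℝ) * l k := mul_nonneg (Nat.cast_nonneg _) (hl0 k).le
      have hMj : (((j : ℕ) : ℝ) + 1) * l k ≤ M k * l k := by
        have : ((j : ℕ) : ℝ) + 1 ≤ M k := by exact_mod_cast j.2
        exact mul_le_mul_of_nonneg_right this (hl0 k).le
      rw [intervalIntegral.integral_eq_integral_of_support_subset,
        ← intervalIntegral.integral_eq_integral_of_support_subset (a := 0) (b := l k)]
      · exact hτ k
      · intro s hs
        have := hsupp s hs
        exact ⟨by linarith [hη0 k], by linarith [hη0 k]⟩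
      · intro s hs
        have := hsupp s hs
        refine ⟨by linarith [hη0 k], ?_⟩
        linarith [hη0 k, hS₁ k, le_max_left S₁ 0]
    refine lt_of_le_of_lt ?_ hlt
    refine intervalIntegral.integral_mono_on hS0 (Continuous.intervalIntegrable (by fun_prop) _ _)
      (Continuous.intervalIntegrable (by fun_prop) _ _) fun s _ => ?_
    simp only [hF, Real.sq_sqrt (hκ k).le]
    by_cases hs : φ k (s - (j : ℕ) * l k) = 0
    · simp [hs]
    · have h1 := htop k j s (hη k _ hs).2
      have h2 : ε * exp (2 * s) ≤ τ k := by
        refine le_trans ?_ (hM k (by have := j.2; omega))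
        exact mul_le_mul_of_nonneg_left (Real.exp_le_exp.2 (by linarith)) hε.le
      have := mul_le_mul_of_nonneg_right h2 (sq_nonneg (φ k (s - (j : ℕ) * l k)))
      linarith

/-- Choosing in `negIndex_le` the least numbers of vanishing conditions that reach the region where
the mass term dominates gives the upper half of the asymptotics, up to a bounded error. -/
lemma count_upper (h : MFam a b e g)
    (hgap : ∀ v, SP v → (∀ i, ip (g i) v = 0) → 0 ≤ Qf a b v (deriv v)) :
    ∃ D : ℝ, ∀ ε > 0, ∃ n : ℕ, negIndexOn Adm (qform a b (-ε)) ≤ (n : ℕ∞) ∧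
      (ε < 1 → (n : ℝ) ≤ (-Real.log ε) * (1 / (2 * π) * ∑ k, √(a - e k)) + D) := by
  refine ⟨∑ k, (|Real.log √(a - e k)| * (√(a - e k) / π) + 1), fun ε hε =>
    ⟨∑ k, ⌈(|Real.log ε| / 2 + |Real.log √(a - e k)|) * (√(a - e k) / π)⌉₊,
    negIndex_le h hgap hε _ fun k => ?_, fun hε1 => ?_⟩⟩
  · have hκ : 0 < a - e k := sub_pos.2 (h.lt k)
    have hs : 0 < √(a - e k) := Real.sqrt_pos.2 hκ
    set n := ⌈(|Real.log ε| / 2 + |Real.log √(a - e k)|) * (√(a - e k) / π)⌉₊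
    have h1 : (|Real.log ε| / 2 + |Real.log √(a - e k)|) * (√(a - e k) / π) ≤ n := Nat.le_ceil _
    have h2 : |Real.log ε| / 2 + |Real.log √(a - e k)| ≤ n * (π / √(a - e k)) := by
      have := mul_le_mul_of_nonneg_right h1 (div_pos pi_pos hs).le
      refine le_trans (le_of_eq ?_) this
      field_simp
    have h3 : a - e k = exp (2 * Real.log √(a - e k)) := by
      rw [two_mul, Real.exp_add, Real.exp_log hs, Real.mul_self_sqrt hκ.le]
    conv_lhs => rw [h3]
    conv_rhs => rw [← Real.exp_log hε, ← Real.exp_add]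
    apply Real.exp_le_exp.2
    linarith [le_abs_self (Real.log √(a - e k)), neg_abs_le (Real.log ε)]
  · have hlog : |Real.log ε| = - Real.log ε := abs_of_neg (Real.log_neg hε hε1)
    push_cast
    rw [← mul_assoc, Finset.mul_sum, ← Finset.sum_add_distrib]
    refine Finset.sum_le_sum fun k _ => ?_
    have := (Nat.ceil_lt_add_one (a := (|Real.log ε| / 2 + |Real.log √(a - e k)|) *
      (√(a - e k) / π)) (by positivity)).le
    refine this.trans (le_of_eq ?_)
    rw [hlog]
    field_simp
    ring

/-- Filling `[0, |log ε| / 2]` up to a bounded remainder with bumps of length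
`(1 + δ) π / √(a - e k)` gives the lower half of the asymptotics, up to the factor `1 + δ`. -/
lemma count_lower (h : MFam a b e g) {δ : ℝ} (hδ : 0 < δ) :
    ∃ D : ℝ, ∀ ε > 0, ∃ n : ℕ, (n : ℕ∞) ≤ negIndexOn Adm (qform a b (-ε)) ∧
      (-Real.log ε) * ((1 / (2 * π) * ∑ k, √(a - e k)) / (1 + δ)) - D ≤ n := by
  have hs : ∀ k, 0 < √(a - e k) := fun k => Real.sqrt_pos.2 (sub_pos.2 (h.lt k))
  set l : Fin m → ℝ := fun k => (1 + δ) * (π / √(a - e k)) with hl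
  have hl0 : ∀ k, 0 < l k := fun k => mul_pos (by linarith) (div_pos pi_pos (hs k))
  obtain ⟨τ, hτ0, hτ⟩ := exists_le_negIndex h l hl0 (fun k => by
    have : √(a - e k) * l k = (1 + δ) * π := by
      have := (hs k).ne'
      simp only [hl]; field_simp
    rw [this]; nlinarith [pi_pos])
  refine ⟨∑ k, (1 - Real.log (τ k) / 2 / l k), fun ε hε =>
    ⟨∑ k, ⌊(-Real.log ε / 2 + Real.log (τ k) / 2) / l k⌋₊, hτ ε hε _ fun k hk => ?_, ?_⟩⟩
  · have h0 : 0 ≤ (-Real.log ε / 2 + Real.log (τ k) / 2) / l k := by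
      by_contra! hc
      exact hk (Nat.floor_of_nonpos hc.le)
    have h1 := Nat.floor_le h0
    rw [le_div_iff₀ (hl0 k)] at h1
    generalize ⌊(-Real.log ε / 2 + Real.log (τ k) / 2) / l k⌋₊ = n at h1 ⊢
    conv_lhs => rw [← Real.exp_log hε, ← Real.exp_add]
    conv_rhs => rw [← Real.exp_log (hτ0 k)]
    apply Real.exp_le_exp.2
    linarith
  · push_cast
    rw [mul_div_assoc', ← mul_assoc, Finset.mul_sum, Finset.sum_div, ← Finset.sum_sub_distrib]
    refine Finset.sum_le_sum fun k _ => ?_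
    have h1 := (Nat.lt_floor_add_one ((-Real.log ε / 2 + Real.log (τ k) / 2) / l k)).le
    have h2 : -Real.log ε * (1 / (2 * π)) * √(a - e k) / (1 + δ) = -Real.log ε / 2 / l k := by
      have := (hs k).ne'
      have : 1 + δ ≠ 0 := by linarith
      simp only [hl]; field_simp
    rw [h2]
    have h3 := add_div (-Real.log ε / 2) (Real.log (τ k) / 2) (l k)
    linarith

end Count

/-! ### The limit -/

/-- If `N(E)` lies between `(c / (1 + δ)) Λ - D` (for every `δ > 0`) and `c Λ + D`, where
`Λ = |log |E||`, then `N(E) / Λ → c` as `E ↗ 0`. -/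
lemma tendsto_count {N : ℝ → ℝ} {c : ℝ}
    (hup : ∃ D : ℝ, ∀ E < 0, -1 < E → N E ≤ (-Real.log (-E)) * c + D)
    (hlo : ∀ δ > 0, ∃ D : ℝ, ∀ E < 0, (-Real.log (-E)) * (c / (1 + δ)) - D ≤ N E) :
    Tendsto (fun E : ℝ => N E / |Real.log (abs E)|) (𝓝[<] 0) (𝓝 c) := by
  have hΛ : Tendsto (fun E : ℝ => -Real.log (-E)) (𝓝[<] 0) atTop := by
    refine tendsto_neg_atBot_atTop.comp ?_
    have : (fun E : ℝ => Real.log (-E)) = Real.log := funext Real.log_neg_eq_log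
    rw [this]
    exact Real.tendsto_log_nhdsNE_zero.mono_left
      (nhdsWithin_mono _ fun x (hx : x < 0) => hx.ne)
  have hev : ∀ᶠ E : ℝ in 𝓝[<] 0, E < 0 ∧ -1 < E :=
    Filter.Eventually.and self_mem_nhdsWithin (mem_nhdsWithin_of_mem_nhds (Ioi_mem_nhds (by norm_num)))
  have habs : ∀ E : ℝ, E < 0 → -1 < E → |Real.log (abs E)| = -Real.log (-E) := fun E h0 h1 => by
    rw [abs_of_neg h0, abs_of_neg (Real.log_neg (by linarith) (by linarith))]
  have hdiv : ∀ D : ℝ, Tendsto (fun E : ℝ => D / (-Real.log (-E))) (𝓝[<] 0) (𝓝 0) :=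
    fun D => hΛ.const_div_atTop D
  rw [tendsto_order]
  constructor
  · intro c' hc'
    obtain ⟨δ, hδ, hδ0⟩ : ∃ δ : ℝ, c' < c / (1 + δ) ∧ 0 < δ := by
      have h1 : Tendsto (fun δ : ℝ => c / (1 + δ)) (𝓝[>] 0) (𝓝 (c / (1 + 0))) := by
        refine Tendsto.mono_left ?_ nhdsWithin_le_nhds
        exact tendsto_const_nhds.div (tendsto_const_nhds.add tendsto_id) (by norm_num)
      rw [add_zero, div_one] at h1
      exact ((h1.eventually_const_lt hc').and self_mem_nhdsWithin).exists
    obtain ⟨D, hD⟩ := hlo δ hδ0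
    filter_upwards [hev, hΛ.eventually_gt_atTop 0,
      (hdiv D).eventually_lt_const (sub_pos.2 hδ)] with E hE hpos hlt
    rw [habs E hE.1 hE.2, lt_div_iff₀ hpos]
    rw [div_lt_iff₀ hpos] at hlt
    linarith [hD E hE.1]
  · intro c' hc'
    obtain ⟨D, hD⟩ := hup
    filter_upwards [hev, hΛ.eventually_gt_atTop 0,
      (hdiv D).eventually_lt_const (sub_pos.2 hc')] with E hE hpos hlt
    rw [habs E hE.1 hE.2, div_lt_iff₀ hpos]
    rw [div_lt_iff₀ hpos] at hlt
    linarith [hD E hE.1 hE.2]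

theorem dipole_schroedinger_dirichlet_accumulation
    (a b : ℝ) (hb : 0 < b)
    (A : Set E2) (hA : A = {x : E2 | 1 < ‖x‖})
    (N : ℝ → ℕ∞)
    (hN : ∀ E, N E = negIndexOn
      (fun ψ : E2 → ℂ => ContDiff ℝ (⊤ : ℕ∞) ψ ∧ HasCompactSupport ψ ∧ tsupport ψ ⊆ A)
      (fun ψ => ∫ x in A,
        ((∑ j : Fin 2, ‖fderiv ℝ ψ x (EuclideanSpace.single j 1)‖ ^ 2)
          - ((a + b * x 0 / ‖x‖) / ‖x‖ ^ 2) * ‖ψ x‖ ^ 2 - E * ‖ψ x‖ ^ 2))) :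
    (∀ E < (0 : ℝ), N E ≠ ⊤) ∧
      Tendsto (fun E : ℝ => ((N E).toNat : ℝ) / |Real.log (abs E)|)
        (nhdsWithin 0 (Set.Iio (0 : ℝ)))
        (nhds ((1 / (2 * π)) *
          ∑' e : {e : ℝ // IsMathieuEV b e ∧ e < a},
            (mathieuMult b e : ℝ) * Real.sqrt (a - (e : ℝ)))) := by
  subst hA
  have hN' : ∀ E, N E = negIndexOn Adm (qform a b E) := hN
  obtain ⟨m, e, g, h, hgap, hsum⟩ := mathieu_spectral a b hb
  rw [hsum]
  obtain ⟨D, hD⟩ := count_upper h hgap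
  have hfin : ∀ E < (0 : ℝ), N E ≠ ⊤ := fun E hE => by
    obtain ⟨n, hn, -⟩ := hD (-E) (by linarith)
    rw [neg_neg, ← hN'] at hn
    exact ne_top_of_le_ne_top (ENat.natCast_ne_top n) hn
  refine ⟨hfin, tendsto_count ⟨D, fun E hE hE1 => ?_⟩ fun δ hδ => ?_⟩
  · obtain ⟨n, hn, hn'⟩ := hD (-E) (by linarith)
    rw [neg_neg, ← hN'] at hn
    have : (N E).toNat ≤ n := ENat.toNat_le_of_le_natCast hn
    exact (Nat.cast_le.2 this).trans (hn' (by linarith))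
  · obtain ⟨D', hD'⟩ := count_lower h hδ
    refine ⟨D', fun E hE => ?_⟩
    obtain ⟨n, hn, hn'⟩ := hD' (-E) (by linarith)
    rw [neg_neg, ← hN', ← ENat.natCast_toNat (hfin E hE), Nat.cast_le] at hn
    exact hn'.trans (Nat.cast_le.2 hn)
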